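/- arXiv:1910.08870 — 4 statements merged into one kernel-verified Lean document; each statement's English description precedes it below -/
import Mathlib

section
/- Let N ≥ 2, σ ∈ (−1, 0), and 1 < p < (N−2σ)/(N−2−2σ). Let α ∈ (0,1) and let w ∈ C^α(ℝ^N) ∩ C_0(ℝ^N) ∩ L¹(ℝ^N) satisfy ∫_{ℝ^N} w(x) dx > 0. Then for every u_0 ∈ C_0(ℝ^N) there is no global mild solution of ∂_t u = Δu + |u|^p + t^σ w(x) with initial data u_0; equivalently, every mild solution blows up in finite time. -/
open MeasureTheory Filter Set
open scoped ENNReal NNReal ZeroAtInfty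

noncomputable section

abbrev Eu (N : ℕ) := EuclideanSpace ℝ (Fin N)

noncomputable def heatSG (N : ℕ) (t : ℝ) (φ : Eu N → ℝ) (x : Eu N) : ℝ :=
  if t ≤ 0 then φ x
  else ∫ y, (4 * Real.pi * t) ^ (-(N : ℝ) / 2) * Real.exp (-‖x - y‖ ^ 2 / (4 * t)) * φ y

def IsC0 {N : ℕ} (φ : Eu N → ℝ) : Prop :=
  Continuous φ ∧ Tendsto φ (cocompact (Eu N)) (nhds 0)

def IsHolder {N : ℕ} (α : ℝ) (φ : Eu N → ℝ) : Prop :=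
  ∃ C : ℝ≥0, HolderWith C α.toNNReal φ

def IsMildSolution (N : ℕ) (p σ : ℝ) (u₀ w : Eu N → ℝ) (T : ℝ)
    (u : ℝ → C₀(Eu N, ℝ)) : Prop :=
  ContinuousOn u (Icc 0 T) ∧
  ∀ t ∈ Icc (0:ℝ) T, ∀ x,
    u t x = heatSG N t u₀ x
      + ∫ s in (0:ℝ)..t, heatSG N (t - s) (fun y => |u s y| ^ p + s ^ σ * w y) x

def IsGlobalMildSolution (N : ℕ) (p σ : ℝ) (u₀ w : Eu N → ℝ)
    (u : ℝ → C₀(Eu N, ℝ)) : Prop :=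
  ContinuousOn u (Ici 0) ∧
  ∀ t ∈ Ici (0:ℝ), ∀ x,
    u t x = heatSG N t u₀ x
      + ∫ s in (0:ℝ)..t, heatSG N (t - s) (fun y => |u s y| ^ p + s ^ σ * w y) x

/-!
Fix a large `T` and follow a solution along the backward heat flow: `z t = (e^{(T-t)Δ} u(t))(0)`.
By Duhamel's formula and Jensen's inequality `z' ≥ |z|^p + t^σ (e^{(T-t)Δ} w)(0)`. Since `∫ w > 0`,
the forcing term is at least `γ = c T^{σ - N/2}` on `[T/4, T/2]`. An inequality `z' ≥ |z|^p + γ`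
persists for a time at most `C γ^{1/p - 1}`, whatever `z` is initially, so
`T/4 ≤ C' T^{(N/2 - σ)(1 - 1/p)}`. The exponent is less than `1` exactly in the subcritical range,
which is absurd as `T → ∞`.
-/

open ProbabilityTheory Module
open scoped Real Topology

section HeatKernel

variable {E : Type*} [NormedAddCommGroup E] [InnerProductSpace ℝ E] {t : ℝ}

variable (E) in
/-- The Gauss–Weierstrass kernel `(4πt)^{-d/2} exp(-|x|² / 4t)` of `e^{tΔ}` on a `d`-dimensional
inner product space. -/
def heatKernel (t : ℝ) (x : E) : ℝ :=
  (4 * π * t) ^ (-(finrank ℝ E : ℝ) / 2) * Real.exp (-‖x‖ ^ 2 / (4 * t))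

lemma heatKernel_nonneg (ht : 0 ≤ t) (x : E) : 0 ≤ heatKernel E t x := by
  unfold heatKernel; positivity

@[fun_prop]
lemma continuous_heatKernel (t : ℝ) : Continuous (heatKernel E t) := by
  unfold heatKernel; fun_prop

end HeatKernel

section HeatMeasure

variable (E : Type*) [NormedAddCommGroup E] [InnerProductSpace ℝ E] [FiniteDimensional ℝ E]
  [MeasurableSpace E] [BorelSpace E]

/-- The law whose convolution operator is `e^{tΔ}`: a centred Gaussian of covariance `2t`. Writing
it as a dilated standard Gaussian makes it the Dirac mass at `0` for `t ≤ 0`. -/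
def heatMeasure (t : ℝ) : Measure E :=
  (stdGaussian E).map (√(2 * t) • ·)

instance isProbabilityMeasure_heatMeasure (t : ℝ) : IsProbabilityMeasure (heatMeasure E t) :=
  Measure.isProbabilityMeasure_map (by fun_prop)

variable {E}

lemma heatMeasure_of_nonpos {t : ℝ} (ht : t ≤ 0) : heatMeasure E t = Measure.dirac 0 := by
  simp [heatMeasure, Real.sqrt_eq_zero_of_nonpos (by linarith : 2 * t ≤ 0), Measure.map_const]

lemma charFun_heatMeasure {t : ℝ} (ht : 0 ≤ t) (ξ : E) :
    charFun (heatMeasure E t) ξ = Complex.exp (-(t * ‖ξ‖ ^ 2)) := by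
  have hsq : (‖√(2 * t) • ξ‖ : ℂ) ^ 2 = 2 * t * ‖ξ‖ ^ 2 := by
    norm_cast
    rw [norm_smul, mul_pow, Real.norm_eq_abs, sq_abs, Real.sq_sqrt (by positivity)]
  rw [heatMeasure, charFun_map_smul, charFun_stdGaussian, hsq]
  congr 1
  ring

lemma heatMeasure_conv {s t : ℝ} (hs : 0 ≤ s) (ht : 0 ≤ t) :
    heatMeasure E s ∗ heatMeasure E t = heatMeasure E (s + t) := by
  refine Measure.ext_of_charFun (funext fun ξ => ?_)
  rw [charFun_conv, charFun_heatMeasure hs, charFun_heatMeasure ht,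
    charFun_heatMeasure (add_nonneg hs ht), ← Complex.exp_add]
  congr 1
  push_cast
  ring

lemma integral_heatKernel_mul_cexp {t : ℝ} (ht : 0 < t) (ξ : E) :
    ∫ x, heatKernel E t x • Complex.exp (inner ℝ x ξ * Complex.I)
      = Complex.exp (-(t * ‖ξ‖ ^ 2)) := by
  have hgauss := GaussianFourier.integral_cexp_neg_mul_sq_norm_add (V := E)
    (b := (1 / (4 * t) : ℝ)) (by rw [Complex.ofReal_re]; positivity) Complex.I ξ
  have hsplit (x : E) : heatKernel E t x • Complex.exp (inner ℝ x ξ * Complex.I)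
      = ((4 * π * t : ℝ) : ℂ) ^ (-(finrank ℝ E : ℂ) / 2) *
        Complex.exp (-(1 / (4 * t) : ℝ) * ‖x‖ ^ 2 + Complex.I * inner ℝ ξ x) := by
    have hpow := Complex.ofReal_cpow (by positivity : 0 ≤ 4 * π * t) (-(finrank ℝ E : ℝ) / 2)
    push_cast at hpow
    rw [Complex.exp_add, real_inner_comm, Complex.real_smul, heatKernel]
    push_cast
    rw [hpow, mul_comm Complex.I, mul_assoc]
    congr 3
    ring
  have hbase : ((4 * π * t : ℝ) : ℂ) ≠ 0 := by exact_mod_cast (by positivity : 4 * π * t ≠ 0)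
  simp only [hsplit]
  rw [integral_const_mul, hgauss,
    show (π : ℂ) / (1 / (4 * t) : ℝ) = (4 * π * t : ℝ) by push_cast; field_simp,
    neg_div, ← mul_assoc, ← Complex.cpow_add _ _ hbase]
  have : (t : ℂ) ≠ 0 := by exact_mod_cast ht.ne'
  simp only [neg_add_cancel, Complex.cpow_zero, Complex.I_sq, Complex.ofReal_div,
    Complex.ofReal_one, Complex.ofReal_mul, Complex.ofReal_ofNat]
  field_simp

lemma integral_heatKernel {t : ℝ} (ht : 0 < t) : ∫ x, heatKernel E t x = 1 := by
  have h := integral_heatKernel_mul_cexp ht (0 : E)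
  simp only [inner_zero_right, Complex.ofReal_zero, zero_mul, Complex.exp_zero, norm_zero,
    Complex.real_smul, mul_one] at h
  rw [integral_complex_ofReal] at h
  simpa using h

lemma integral_withDensity_heatKernel {F : Type*} [NormedAddCommGroup F] [NormedSpace ℝ F] {t : ℝ}
    (ht : 0 ≤ t) (φ : E → F) :
    ∫ x, φ x ∂(volume.withDensity fun x => ENNReal.ofReal (heatKernel E t x))
      = ∫ x, heatKernel E t x • φ x := by
  rw [integral_withDensity_eq_integral_toReal_smul (by fun_prop) (by simp)]
  simp only [ENNReal.toReal_ofReal (heatKernel_nonneg ht _)]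

lemma heatMeasure_eq_withDensity {t : ℝ} (ht : 0 < t) :
    heatMeasure E t = volume.withDensity fun x => ENNReal.ofReal (heatKernel E t x) := by
  have : IsFiniteMeasure (volume.withDensity fun x => ENNReal.ofReal (heatKernel E t x)) :=
    isFiniteMeasure_withDensity_ofReal
      (integrable_of_integral_eq_one (integral_heatKernel ht)).hasFiniteIntegral
  refine Measure.ext_of_charFun (funext fun ξ => ?_)
  rw [charFun_heatMeasure ht.le, charFun_apply, integral_withDensity_heatKernel ht.le,
    integral_heatKernel_mul_cexp ht]

end HeatMeasure

section HeatFlow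

variable {E : Type*} [NormedAddCommGroup E] [InnerProductSpace ℝ E] [FiniteDimensional ℝ E]
  [MeasurableSpace E] [BorelSpace E] {φ : E → ℝ} {C t : ℝ}

/-- The heat semigroup `e^{tΔ}φ`, as an average of `φ` against `heatMeasure`. It is the identity
for `t ≤ 0`. -/
def heatFlow (t : ℝ) (φ : E → ℝ) (x : E) : ℝ :=
  ∫ ξ, φ (x + ξ) ∂heatMeasure E t

lemma heatFlow_of_nonpos (ht : t ≤ 0) (φ : E → ℝ) : heatFlow t φ = φ := by
  funext x
  simp [heatFlow, heatMeasure_of_nonpos ht]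

lemma heatFlow_eq_integral_heatKernel (ht : 0 < t) (φ : E → ℝ) (x : E) :
    heatFlow t φ x = ∫ y, heatKernel E t (x - y) * φ y := by
  rw [heatFlow, heatMeasure_eq_withDensity ht, integral_withDensity_heatKernel ht.le,
    ← integral_add_left_eq_self (fun y => heatKernel E t (x - y) * φ y) x]
  simp only [heatKernel, sub_add_cancel_left, norm_neg, smul_eq_mul]

lemma heatFlow_eq_integral_stdGaussian (hφ : Continuous φ) (t : ℝ) (x : E) :
    heatFlow t φ x = ∫ ξ, φ (x + √(2 * t) • ξ) ∂stdGaussian E := by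
  rw [heatFlow, heatMeasure, integral_map (by fun_prop) (by fun_prop)]

lemma abs_heatFlow_le (hC : ∀ y, |φ y| ≤ C) (t : ℝ) (x : E) : |heatFlow t φ x| ≤ C := by
  simpa [heatFlow] using norm_integral_le_of_norm_le_const (μ := heatMeasure E t)
    (f := fun ξ => φ (x + ξ)) (Eventually.of_forall fun ξ => hC (x + ξ))

lemma integrable_of_continuous_of_bounded {X : Type*} [MeasurableSpace X] [TopologicalSpace X]
    [OpensMeasurableSpace X] (μ : Measure X) [IsFiniteMeasure μ] {f : X → ℝ} (hf : Continuous f)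
    (hC : ∀ y, |f y| ≤ C) : Integrable f μ :=
  .of_bound hf.measurable.aestronglyMeasurable C (Eventually.of_forall hC)

lemma integrable_rpow_abs_of_continuous_of_bounded {X : Type*} [MeasurableSpace X]
    [TopologicalSpace X] [OpensMeasurableSpace X] (μ : Measure X) [IsFiniteMeasure μ] {f : X → ℝ}
    {p : ℝ} (hp : 0 ≤ p) (hf : Continuous f) (hC : ∀ y, |f y| ≤ C) :
    Integrable (fun y => |f y| ^ p) μ :=
  integrable_of_continuous_of_bounded μ (hf.abs.rpow_const fun _ => Or.inr hp) fun y =>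
    (abs_of_nonneg (by positivity)).trans_le (Real.rpow_le_rpow (abs_nonneg _) (hC y) hp)

lemma continuous_heatFlow (hφ : Continuous φ) (hC : ∀ y, |φ y| ≤ C) (t : ℝ) :
    Continuous (heatFlow t φ) :=
  continuous_of_dominated (bound := fun _ => C)
    (fun x => (by fun_prop : Continuous fun ξ => φ (x + ξ)).aestronglyMeasurable)
    (fun _ => Eventually.of_forall fun _ => hC _) (integrable_const _)
    (Eventually.of_forall fun _ => by fun_prop)

lemma heatFlow_heatFlow (hφ : Continuous φ) (hC : ∀ y, |φ y| ≤ C) {s t : ℝ} (hs : 0 ≤ s)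
    (ht : 0 ≤ t) (x : E) : heatFlow s (heatFlow t φ) x = heatFlow (s + t) φ x := by
  have hint : Integrable (fun ξ => φ (x + ξ)) (heatMeasure E s ∗ heatMeasure E t) :=
    integrable_of_continuous_of_bounded _ (by fun_prop) fun ξ => hC (x + ξ)
  simp only [heatFlow, ← heatMeasure_conv hs ht, integral_conv hint, add_assoc]

lemma rpow_abs_heatFlow_le {p : ℝ} (hp : 1 ≤ p) (hφ : Continuous φ) (hC : ∀ y, |φ y| ≤ C)
    (t : ℝ) (x : E) : |heatFlow t φ x| ^ p ≤ heatFlow t (fun y => |φ y| ^ p) x := by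
  have hp0 : 0 ≤ p := by linarith
  have habs : |heatFlow t φ x| ≤ ∫ ξ, |φ (x + ξ)| ∂heatMeasure E t := abs_integral_le_integral_abs
  have hjensen : (∫ ξ, |φ (x + ξ)| ∂heatMeasure E t) ^ p
      ≤ ∫ ξ, |φ (x + ξ)| ^ p ∂heatMeasure E t := by
    refine (convexOn_rpow hp).map_integral_le (Real.continuous_rpow_const hp0).continuousOn
      isClosed_Ici (Eventually.of_forall fun ξ => mem_Ici.mpr (abs_nonneg _)) ?_ ?_
    · exact integrable_of_continuous_of_bounded _ (by fun_prop)
        fun ξ => (abs_abs _).trans_le (hC (x + ξ))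
    · exact integrable_rpow_abs_of_continuous_of_bounded _ hp0 (by fun_prop) fun ξ => hC (x + ξ)
  exact (Real.rpow_le_rpow (abs_nonneg _) habs hp0).trans hjensen

lemma rpow_abs_heatFlow_add_le {p : ℝ} {ψ : E → ℝ} {B : ℝ} (hp : 1 ≤ p) (hφ : Continuous φ)
    (hC : ∀ y, |φ y| ≤ C) (hψ : Continuous ψ) (hB : ∀ y, |ψ y| ≤ B) (c t : ℝ) (x : E) :
    |heatFlow t φ x| ^ p + c * heatFlow t ψ x ≤ heatFlow t (fun y => |φ y| ^ p + c * ψ y) x := by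
  have hφint : Integrable (fun ξ => |φ (x + ξ)| ^ p) (heatMeasure E t) :=
    integrable_rpow_abs_of_continuous_of_bounded _ (zero_le_one.trans hp) (by fun_prop)
      fun ξ => hC (x + ξ)
  have hψint : Integrable (fun ξ => ψ (x + ξ)) (heatMeasure E t) :=
    integrable_of_continuous_of_bounded _ (by fun_prop) fun ξ => hB (x + ξ)
  calc |heatFlow t φ x| ^ p + c * heatFlow t ψ x
      ≤ heatFlow t (fun y => |φ y| ^ p) x + c * heatFlow t ψ x := by
        gcongr; exact rpow_abs_heatFlow_le hp hφ hC t x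
    _ = heatFlow t (fun y => |φ y| ^ p + c * ψ y) x := by
        simp only [heatFlow]
        rw [integral_add hφint (hψint.const_mul c), integral_const_mul]

lemma tendsto_rpow_mul_heatFlow_atTop (hφ : Integrable φ) (x : E) :
    Tendsto (fun t => (4 * π * t) ^ ((finrank ℝ E : ℝ) / 2) * heatFlow t φ x) atTop
      (𝓝 (∫ y, φ y)) := by
  have hlim : Tendsto (fun t => ∫ y, Real.exp (-‖x - y‖ ^ 2 / (4 * t)) * φ y) atTop
      (𝓝 (∫ y, φ y)) := by
    refine tendsto_integral_filter_of_dominated_convergence (‖φ ·‖)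
      (Eventually.of_forall fun t => ?_) ?_ hφ.norm (Eventually.of_forall fun y => ?_)
    · exact (Continuous.aestronglyMeasurable (by fun_prop)).mul hφ.1
    · filter_upwards [eventually_gt_atTop 0] with t ht
      refine Eventually.of_forall fun y => ?_
      rw [norm_mul, Real.norm_eq_abs, Real.abs_exp]
      refine mul_le_of_le_one_left (norm_nonneg _) (Real.exp_le_one_iff.mpr ?_)
      exact div_nonpos_of_nonpos_of_nonneg (by simp) (by positivity)
    · have hexponent : Tendsto (fun t : ℝ => -‖x - y‖ ^ 2 / (4 * t)) atTop (𝓝 0) :=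
        (tendsto_id.const_mul_atTop (by norm_num)).const_div_atTop _
      simpa using ((Real.continuous_exp.tendsto 0).comp hexponent).mul_const (φ y)
  refine hlim.congr' ?_
  filter_upwards [eventually_gt_atTop 0] with t ht
  have hpow : (4 * π * t) ^ ((finrank ℝ E : ℝ) / 2) * (4 * π * t) ^ (-(finrank ℝ E : ℝ) / 2)
      = 1 := by
    rw [← Real.rpow_add (by positivity), neg_div, add_neg_cancel, Real.rpow_zero]
  simp only [heatFlow_eq_integral_heatKernel ht, heatKernel, mul_assoc]
  rw [integral_const_mul, ← mul_assoc, ← mul_assoc 4, hpow, one_mul]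

end HeatFlow

section Osgood

/-- **Osgood's criterion**, quantitatively: `∫ 1 / F - t` is nondecreasing along `v' ≥ F(v)`. -/
lemma sub_le_integral_inv_of_le_deriv {F v v' : ℝ → ℝ} (hF : Continuous F) (hF0 : ∀ y, 0 < F y)
    (hint : Integrable fun y => (F y)⁻¹) {a b : ℝ} (hab : a ≤ b)
    (hv : ∀ t ∈ Icc a b, HasDerivAt v (v' t) t) (hle : ∀ t ∈ Icc a b, F (v t) ≤ v' t) :
    b - a ≤ ∫ y, (F y)⁻¹ := by
  have hcont : Continuous fun y => (F y)⁻¹ := hF.inv₀ fun y => (hF0 y).ne'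
  have hderiv (t) (ht : t ∈ Icc a b) :
      HasDerivAt (fun t => (∫ y in v a..v t, (F y)⁻¹) - t) ((F (v t))⁻¹ * v' t - 1) t :=
    ((hcont.integral_hasStrictDerivAt (v a) (v t)).hasDerivAt.comp t (hv t ht)).sub
      (hasDerivAt_id t)
  have hmono : MonotoneOn (fun t => (∫ y in v a..v t, (F y)⁻¹) - t) (Icc a b) := by
    refine monotoneOn_of_deriv_nonneg (convex_Icc a b)
      (fun t ht => (hderiv t ht).continuousAt.continuousWithinAt)
      (fun t ht => (hderiv t (interior_subset ht)).differentiableAt.differentiableWithinAt)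
      fun t ht => ?_
    have ht' := interior_subset ht
    rw [(hderiv t ht').deriv, sub_nonneg, inv_mul_eq_div, one_le_div (hF0 _)]
    exact hle t ht'
  have hends := hmono (left_mem_Icc.mpr hab) (right_mem_Icc.mpr hab) hab
  have hbound : ∫ y in v a..v b, (F y)⁻¹ ≤ ∫ y, (F y)⁻¹ := by
    have hinv0 (y : ℝ) : 0 ≤ (F y)⁻¹ := (inv_pos.mpr (hF0 y)).le
    calc ∫ y in v a..v b, (F y)⁻¹ ≤ ∫ y in uIoc (v a) (v b), ‖(F y)⁻¹‖ :=
          (Real.le_norm_self _).trans intervalIntegral.norm_integral_le_integral_norm_uIoc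
      _ = ∫ y in uIoc (v a) (v b), (F y)⁻¹ := by simp only [Real.norm_of_nonneg (hinv0 _)]
      _ ≤ ∫ y, (F y)⁻¹ := setIntegral_le_integral hint (Eventually.of_forall hinv0)
  simp only [intervalIntegral.integral_same] at hends
  linarith

variable {p γ : ℝ}

lemma continuous_abs_rpow_add (hp : 0 ≤ p) (γ : ℝ) : Continuous fun y : ℝ => |y| ^ p + γ :=
  (continuous_abs.rpow_const fun _ => Or.inr hp).add continuous_const

lemma integrable_inv_abs_rpow_add_one (hp : 1 < p) :
    Integrable fun y : ℝ => (|y| ^ p + 1)⁻¹ := by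
  have hpos (y : ℝ) : 0 < |y| ^ p + 1 := by positivity
  have hcont := (continuous_abs_rpow_add (zero_le_one.trans hp.le) 1).inv₀ fun y => (hpos y).ne'
  refine ((integrable_one_add_norm (E := ℝ) (μ := volume) (r := p) (by simpa using hp)).const_mul
    (2 ^ (p - 1))).mono' hcont.aestronglyMeasurable (Eventually.of_forall fun y => ?_)
  have hconvex : (1 + |y|) ^ p ≤ 2 ^ (p - 1) * (|y| ^ p + 1) := by
    have h := NNReal.rpow_add_le_mul_rpow_add_rpow 1 ‖y‖₊ hp.le
    rw [NNReal.one_rpow, add_comm (1 : ℝ≥0) (_ ^ p)] at h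
    exact_mod_cast h
  rw [Real.norm_of_nonneg (inv_pos.mpr (hpos y)).le, Real.norm_eq_abs,
    Real.rpow_neg (by positivity), ← div_eq_mul_inv, inv_eq_one_div,
    div_le_div_iff₀ (hpos y) (by positivity), one_mul]
  exact hconvex

lemma inv_abs_rpow_add_eq_inv_mul (hp : p ≠ 0) (hγ : 0 < γ) (y : ℝ) :
    (|y| ^ p + γ)⁻¹ = γ⁻¹ * (|y / γ ^ (1 / p)| ^ p + 1)⁻¹ := by
  have hroot : (γ ^ (1 / p)) ^ p = γ := by
    rw [← Real.rpow_mul hγ.le, one_div_mul_cancel hp, Real.rpow_one]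
  rw [abs_div, abs_of_pos (by positivity : 0 < γ ^ (1 / p)),
    Real.div_rpow (abs_nonneg y) (by positivity), hroot, ← mul_inv]
  congr 1
  field_simp

lemma integrable_inv_abs_rpow_add (hp : 1 < p) (hγ : 0 < γ) :
    Integrable fun y : ℝ => (|y| ^ p + γ)⁻¹ := by
  simp only [inv_abs_rpow_add_eq_inv_mul (zero_lt_one.trans hp).ne' hγ]
  exact ((integrable_inv_abs_rpow_add_one hp).comp_div (by positivity)).const_mul _

lemma integral_inv_abs_rpow_add (hp : p ≠ 0) (hγ : 0 < γ) :
    ∫ y : ℝ, (|y| ^ p + γ)⁻¹ = γ ^ (1 / p - 1) * ∫ y : ℝ, (|y| ^ p + 1)⁻¹ := by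
  simp only [inv_abs_rpow_add_eq_inv_mul hp hγ]
  rw [integral_const_mul, Measure.integral_comp_div (fun y => (|y| ^ p + 1)⁻¹),
    abs_of_pos (by positivity), smul_eq_mul, ← mul_assoc, Real.rpow_sub_one hγ.ne',
    inv_mul_eq_div]

lemma sub_le_rpow_mul_of_abs_rpow_add_le_deriv (hp : 1 < p) (hγ : 0 < γ) {v v' : ℝ → ℝ} {a b : ℝ}
    (hab : a ≤ b) (hv : ∀ t ∈ Icc a b, HasDerivAt v (v' t) t)
    (hle : ∀ t ∈ Icc a b, |v t| ^ p + γ ≤ v' t) :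
    b - a ≤ γ ^ (1 / p - 1) * ∫ y : ℝ, (|y| ^ p + 1)⁻¹ := by
  have hp0 : 0 < p := zero_lt_one.trans hp
  rw [← integral_inv_abs_rpow_add hp0.ne' hγ]
  exact sub_le_integral_inv_of_le_deriv (continuous_abs_rpow_add hp0.le γ)
    (fun y => by positivity) (integrable_inv_abs_rpow_add hp hγ) hab hv hle

end Osgood

section Duhamel

variable {E : Type*} [NormedAddCommGroup E]

/-- A source term on `(0, T) × E`, jointly continuous and dominated at each time `s` by `g s` with
`g` integrable on `(0, T)`. It may be singular as `s → 0`, like `s ^ σ`. -/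
structure IsDominatedSource (f : ℝ → E → ℝ) (g : ℝ → ℝ) (T : ℝ) : Prop where
  continuousOn : ContinuousOn (fun q : ℝ × E => f q.1 q.2) (Ioo 0 T ×ˢ univ)
  continuousOn_bound : ContinuousOn g (Ioo 0 T)
  integrableOn_bound : IntegrableOn g (Ioo 0 T)
  abs_le : ∀ s ∈ Ioo 0 T, ∀ y, |f s y| ≤ g s

namespace IsDominatedSource

variable {f : ℝ → E → ℝ} {g : ℝ → ℝ} {T : ℝ}

lemma continuous_slice (hf : IsDominatedSource f g T) {s : ℝ} (hs : s ∈ Ioo 0 T) :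
    Continuous (f s) :=
  hf.continuousOn.comp_continuous (f := fun y => (s, y)) (by fun_prop) fun y => ⟨hs, mem_univ y⟩

variable [InnerProductSpace ℝ E] [FiniteDimensional ℝ E] [MeasurableSpace E] [BorelSpace E]

lemma continuousOn_heatFlow (hf : IsDominatedSource f g T) :
    ContinuousOn (fun q : ℝ × ℝ × E => heatFlow q.1 (f q.2.1) q.2.2)
      (univ ×ˢ Ioo 0 T ×ˢ univ) := by
  suffices h : ContinuousOn
      (fun q : ℝ × ℝ × E => ∫ ξ, f q.2.1 (q.2.2 + √(2 * q.1) • ξ) ∂stdGaussian E)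
      (univ ×ˢ Ioo 0 T ×ˢ univ) from
    h.congr fun q hq => heatFlow_eq_integral_stdGaussian (hf.continuous_slice hq.2.1) _ _
  intro q hq
  have hbound : ∀ᶠ q' : ℝ × ℝ × E in 𝓝[univ ×ˢ Ioo 0 T ×ˢ univ] q, g q'.2.1 < g q.2.1 + 1 :=
    (hf.continuousOn_bound.comp (by fun_prop) (fun q' hq' => hq'.2.1) q hq).eventually_lt_const
      (lt_add_one (g q.2.1))
  refine continuousWithinAt_of_dominated (bound := fun _ => g q.2.1 + 1) ?_ ?_
    (integrable_const _) (Eventually.of_forall fun ξ => ?_)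
  · filter_upwards [self_mem_nhdsWithin] with q' hq'
    have := hf.continuous_slice hq'.2.1
    exact Continuous.aestronglyMeasurable (by fun_prop)
  · filter_upwards [self_mem_nhdsWithin, hbound] with q' hq' hlt
    exact Eventually.of_forall fun ξ => (hf.abs_le _ hq'.2.1 _).trans hlt.le
  · exact hf.continuousOn.comp (f := fun q : ℝ × ℝ × E => (q.2.1, q.2.2 + √(2 * q.1) • ξ))
      (by fun_prop) (fun q' hq' => ⟨hq'.2.1, mem_univ _⟩) q hq

lemma integrable_heatFlow_prod (hf : IsDominatedSource f g T) {t : ℝ} (ht : t < T) (μ : Measure E)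
    [IsFiniteMeasure μ] (r : ℝ) (x : E) :
    Integrable (fun q : E × ℝ => heatFlow (r - q.2) (f q.2) (x + q.1))
      (μ.prod (volume.restrict (Ioc 0 t))) := by
  have hsub : Ioc 0 t ⊆ Ioo 0 T := fun s hs => ⟨hs.1, hs.2.trans_lt ht⟩
  have hμ : μ.prod (volume.restrict (Ioc 0 t)) = (μ.prod volume).restrict (univ ×ˢ Ioc 0 t) := by
    rw [← Measure.prod_restrict, Measure.restrict_univ]
  have hmeas : MeasurableSet ((univ : Set E) ×ˢ Ioc 0 t) :=
    MeasurableSet.univ.prod measurableSet_Ioc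
  refine ((hf.integrableOn_bound.mono_set hsub).comp_snd μ).mono' ?_ ?_ <;> rw [hμ]
  · exact (hf.continuousOn_heatFlow.comp (f := fun q : E × ℝ => (r - q.2, q.2, x + q.1))
      (by fun_prop) fun q hq => ⟨mem_univ _, hsub hq.2, mem_univ _⟩).aestronglyMeasurable hmeas
  · filter_upwards [ae_restrict_mem hmeas] with q hq
    exact abs_heatFlow_le (hf.abs_le _ (hsub hq.2)) _ _

lemma heatFlow_intervalIntegral (hf : IsDominatedSource f g T) {r t : ℝ} (hr : 0 ≤ r)
    (ht : t ∈ Ico 0 T) (x : E) :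
    heatFlow r (fun y => ∫ s in (0 : ℝ)..t, heatFlow (t - s) (f s) y) x
      = ∫ s in (0 : ℝ)..t, heatFlow (r + (t - s)) (f s) x := by
  simp only [intervalIntegral.integral_of_le ht.1]
  rw [heatFlow, integral_integral_swap (hf.integrable_heatFlow_prod ht.2 _ t x)]
  refine setIntegral_congr_fun measurableSet_Ioc fun s hs => ?_
  have hs' : s ∈ Ioo 0 T := ⟨hs.1, hs.2.trans_lt ht.2⟩
  exact heatFlow_heatFlow (hf.continuous_slice hs') (hf.abs_le s hs') hr (sub_nonneg.mpr hs.2) x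

lemma heatFlow_duhamel (hf : IsDominatedSource f g T) {φ v : E → ℝ} {C t : ℝ} (hφ : Continuous φ)
    (hC : ∀ y, |φ y| ≤ C) (ht : t ∈ Ico 0 T)
    (hv : ∀ y, v y = heatFlow t φ y + ∫ s in (0 : ℝ)..t, heatFlow (t - s) (f s) y) (x : E) :
    heatFlow (T - t) v x = heatFlow T φ x + ∫ s in (0 : ℝ)..t, heatFlow (T - s) (f s) x := by
  have hTt : 0 ≤ T - t := sub_nonneg.mpr ht.2.le
  have hφint : Integrable (fun ξ => heatFlow t φ (x + ξ)) (heatMeasure E (T - t)) :=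
    integrable_of_continuous_of_bounded _
      ((continuous_heatFlow hφ hC t).comp (continuous_const_add x))
      fun ξ => abs_heatFlow_le hC t (x + ξ)
  have hfint : Integrable (fun ξ => ∫ s in (0 : ℝ)..t, heatFlow (t - s) (f s) (x + ξ))
      (heatMeasure E (T - t)) := by
    simpa only [intervalIntegral.integral_of_le ht.1] using
      (hf.integrable_heatFlow_prod ht.2 _ t x).integral_prod_left
  have hφflow := heatFlow_heatFlow hφ hC hTt ht.1 x
  have hfflow := hf.heatFlow_intervalIntegral hTt ht x
  simp only [sub_add_sub_cancel, sub_add_cancel] at hφflow hfflow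
  rw [← hφflow, ← hfflow, heatFlow, heatFlow, heatFlow, ← integral_add hφint hfint]
  simp only [hv]

lemma hasDerivAt_integral_heatFlow (hf : IsDominatedSource f g T) {t : ℝ} (ht : t ∈ Ioo 0 T)
    (x : E) :
    HasDerivAt (fun t => ∫ s in (0 : ℝ)..t, heatFlow (T - s) (f s) x)
      (heatFlow (T - t) (f t) x) t := by
  have hcont : ContinuousOn (fun s => heatFlow (T - s) (f s) x) (Ioo 0 T) :=
    hf.continuousOn_heatFlow.comp (f := fun s => (T - s, s, x)) (by fun_prop)
      fun s hs => ⟨mem_univ _, hs, mem_univ _⟩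
  have hint : IntegrableOn (fun s => heatFlow (T - s) (f s) x) (Ioo 0 T) :=
    hf.integrableOn_bound.mono' (hcont.aestronglyMeasurable measurableSet_Ioo) <| by
      filter_upwards [ae_restrict_mem measurableSet_Ioo] with s hs
      exact abs_heatFlow_le (hf.abs_le s hs) _ _
  refine intervalIntegral.integral_hasDerivAt_right ?_
    (hcont.stronglyMeasurableAtFilter isOpen_Ioo t ht) (hcont.continuousAt (Ioo_mem_nhds ht.1 ht.2))
  rw [intervalIntegrable_iff_integrableOn_Ioc_of_le ht.1.le]
  exact hint.mono_set fun s hs => ⟨hs.1, hs.2.trans_lt ht.2⟩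

lemma hasDerivAt_heatFlow (hf : IsDominatedSource f g T) {φ : E → ℝ} {C : ℝ} (hφ : Continuous φ)
    (hC : ∀ y, |φ y| ≤ C) {v : ℝ → E → ℝ}
    (hv : ∀ t ∈ Ioo 0 T, ∀ y,
      v t y = heatFlow t φ y + ∫ s in (0 : ℝ)..t, heatFlow (t - s) (f s) y)
    {t : ℝ} (ht : t ∈ Ioo 0 T) (x : E) :
    HasDerivAt (fun t => heatFlow (T - t) (v t) x) (heatFlow (T - t) (f t) x) t := by
  refine HasDerivAt.congr_of_eventuallyEq
    ((hf.hasDerivAt_integral_heatFlow ht x).const_add (heatFlow T φ x)) ?_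
  filter_upwards [Ioo_mem_nhds ht.1 ht.2] with s hs
  exact hf.heatFlow_duhamel hφ hC (Ioo_subset_Ico_self hs) (hv s hs) x

end IsDominatedSource

end Duhamel

section MildSolution

lemma continuousOn_uncurry_zeroAtInfty {X Y : Type*} [TopologicalSpace X] [TopologicalSpace Y]
    {s : Set Y} {u : Y → C₀(X, ℝ)} (hu : ContinuousOn u s) :
    ContinuousOn (fun q : Y × X => u q.1 q.2) (s ×ˢ univ) :=
  (ZeroAtInftyContinuousMap.isometry_toBCF.continuous.comp_continuousOn
    (hu.comp continuousOn_fst fun _ hq => hq.1)).eval continuousOn_snd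

lemma abs_zeroAtInfty_apply_le_norm {X : Type*} [TopologicalSpace X] (φ : C₀(X, ℝ)) (x : X) :
    |φ x| ≤ ‖φ‖ :=
  φ.toBCF.norm_coe_le_norm x

lemma IsC0.exists_abs_le {N : ℕ} {φ : Eu N → ℝ} (hφ : IsC0 φ) : ∃ C, ∀ x, |φ x| ≤ C :=
  ⟨_, abs_zeroAtInfty_apply_le_norm (⟨⟨φ, hφ.1⟩, hφ.2⟩ : C₀(Eu N, ℝ))⟩

lemma heatSG_eq_heatFlow (N : ℕ) (t : ℝ) (φ : Eu N → ℝ) : heatSG N t φ = heatFlow t φ := by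
  funext x
  rcases le_or_gt t 0 with ht | ht
  · rw [heatSG, if_pos ht, heatFlow_of_nonpos ht]
  · simp only [heatSG, if_neg ht.not_ge, heatFlow_eq_integral_heatKernel ht, heatKernel,
      finrank_euclideanSpace, Fintype.card_fin]

variable {N : ℕ} {p σ T W : ℝ} {u₀ w : Eu N → ℝ} {u : ℝ → C₀(Eu N, ℝ)}

namespace IsMildSolution

lemma initial_eq (hu : IsMildSolution N p σ u₀ w T u) (hT : 0 ≤ T) : u 0 = u₀ := by
  funext x
  simpa [heatSG] using hu.2 0 (left_mem_Icc.mpr hT) x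

lemma isDominatedSource (hu : IsMildSolution N p σ u₀ w T u) (hp : 0 ≤ p) (hσ : -1 < σ)
    (hw : Continuous w) (hW : ∀ x, |w x| ≤ W) :
    IsDominatedSource (fun s y => |u s y| ^ p + s ^ σ * w y)
      (fun s => ‖u s‖ ^ p + s ^ σ * W) T where
  continuousOn := by
    have huncurry := (continuousOn_uncurry_zeroAtInfty hu.1).mono
      (prod_mono_left (t := univ) Ioo_subset_Icc_self)
    refine (huncurry.abs.rpow_const fun _ _ => Or.inr hp).add (.mul ?_ (by fun_prop))
    exact continuousOn_fst.rpow_const fun q hq => Or.inl hq.1.1.ne'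
  continuousOn_bound :=
    ((hu.1.mono Ioo_subset_Icc_self).norm.rpow_const fun _ _ => Or.inr hp).add
      ((continuousOn_id.rpow_const fun s hs => Or.inl hs.1.ne').mul continuousOn_const)
  integrableOn_bound := by
    have hnorm : IntegrableOn (fun s => ‖u s‖ ^ p) (Icc 0 T) :=
      (hu.1.norm.rpow_const fun _ _ => Or.inr hp).integrableOn_Icc
    exact (hnorm.mono_set Ioo_subset_Icc_self).add
      (((intervalIntegral.intervalIntegrable_rpow' hσ).1.mono_set Ioo_subset_Ioc_self).mul_const W)
  abs_le s hs y := by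
    refine (abs_add_le _ _).trans (add_le_add ?_ ?_)
    · rw [abs_of_nonneg (by positivity)]
      exact Real.rpow_le_rpow (abs_nonneg _) (abs_zeroAtInfty_apply_le_norm _ _) hp
    · have hsσ : 0 ≤ s ^ σ := Real.rpow_nonneg hs.1.le σ
      rw [abs_mul, abs_of_nonneg hsσ]
      exact mul_le_mul_of_nonneg_left (hW y) hsσ

lemma hasDerivAt_heatFlow (hu : IsMildSolution N p σ u₀ w T u) (hp : 0 ≤ p) (hσ : -1 < σ)
    (hw : Continuous w) (hW : ∀ x, |w x| ≤ W) {t : ℝ} (ht : t ∈ Ioo 0 T) (x : Eu N) :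
    HasDerivAt (fun t => heatFlow (T - t) (u t) x)
      (heatFlow (T - t) (fun y => |u t y| ^ p + t ^ σ * w y) x) t := by
  have hu₀ := hu.initial_eq (ht.1.trans ht.2).le
  refine (hu.isDominatedSource hp hσ hw hW).hasDerivAt_heatFlow (φ := u 0)
    (map_continuous _) (abs_zeroAtInfty_apply_le_norm _) (v := fun t => u t) (fun t ht y => ?_) ht x
  simpa only [heatSG_eq_heatFlow, ← hu₀] using hu.2 t (Ioo_subset_Icc_self ht) y

end IsMildSolution

lemma IsMildSolution.sub_le_of_le_rpow_mul_heatFlow (hu : IsMildSolution N p σ u₀ w T u)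
    (hp : 1 < p) (hσ : -1 < σ) (hw : Continuous w) (hW : ∀ x, |w x| ≤ W) {a b γ : ℝ} (ha : 0 < a)
    (hab : a ≤ b) (hb : b < T) (hγ : 0 < γ) {x : Eu N}
    (hle : ∀ t ∈ Icc a b, γ ≤ t ^ σ * heatFlow (T - t) w x) :
    b - a ≤ γ ^ (1 / p - 1) * ∫ y : ℝ, (|y| ^ p + 1)⁻¹ :=
  sub_le_rpow_mul_of_abs_rpow_add_le_deriv hp hγ hab
    (fun _ ht => hu.hasDerivAt_heatFlow (zero_le_one.trans hp.le) hσ hw hW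
      ⟨ha.trans_le ht.1, ht.2.trans_lt hb⟩ x)
    fun t ht => (add_le_add_right (hle t ht) _).trans <| rpow_abs_heatFlow_add_le hp.le
      (u t).continuous (abs_zeroAtInfty_apply_le_norm (u t)) hw hW _ _ x

lemma IsGlobalMildSolution.isMildSolution (hu : IsGlobalMildSolution N p σ u₀ w u) (T : ℝ) :
    IsMildSolution N p σ u₀ w T u :=
  ⟨hu.1.mono Icc_subset_Ici_self, fun t ht => hu.2 t ht.1⟩

end MildSolution

section LargeTime

lemma rpow_abs_mul_rpow_le_rpow {a T t : ℝ} (ha : 0 < a) (hT : 0 < T) (hat : a * T ≤ t)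
    (htT : t ≤ T) (σ : ℝ) : a ^ |σ| * T ^ σ ≤ t ^ σ := by
  have hratio : a ≤ t / T := (le_div_iff₀ hT).mpr hat
  have ht0 : 0 < t / T := ha.trans_le hratio
  calc a ^ |σ| * T ^ σ ≤ (t / T) ^ |σ| * T ^ σ := by gcongr
    _ ≤ (t / T) ^ σ * T ^ σ := by
        gcongr ?_ * _
        exact Real.rpow_le_rpow_of_exponent_ge ht0 ((div_le_one hT).mpr htT) (le_abs_self σ)
    _ = t ^ σ := by rw [← Real.mul_rpow ht0.le hT.le, div_mul_cancel₀ _ hT.ne']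

lemma exists_forall_mul_rpow_le_rpow_mul_heatFlow {E : Type*} [NormedAddCommGroup E]
    [InnerProductSpace ℝ E] [FiniteDimensional ℝ E] [MeasurableSpace E] [BorelSpace E] {w : E → ℝ}
    (hw : Integrable w) (hpos : 0 < ∫ y, w y) (σ : ℝ) (x : E) :
    ∃ c > 0, ∀ᶠ T in atTop, ∀ t ∈ Icc (T / 4) (T / 2),
      c * T ^ (σ - (finrank ℝ E : ℝ) / 2) ≤ t ^ σ * heatFlow (T - t) w x := by
  set d : ℝ := (finrank ℝ E : ℝ) / 2
  have : 0 ≤ d := by positivity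
  obtain ⟨τ₀, hτ₀⟩ := eventually_atTop.mp
    ((tendsto_rpow_mul_heatFlow_atTop hw x).eventually_const_le (half_lt_self hpos))
  refine ⟨(1 / 4) ^ |σ| * ((∫ y, w y) / 2) / (4 * π) ^ d, by positivity, ?_⟩
  filter_upwards [eventually_ge_atTop (2 * τ₀), eventually_gt_atTop 0] with T hτT hT t ht
  have hτ : 0 < T - t := by linarith [ht.2]
  have hflow : (∫ y, w y) / 2 / (4 * π * T) ^ d ≤ heatFlow (T - t) w x := calc
    (∫ y, w y) / 2 / (4 * π * T) ^ d ≤ (∫ y, w y) / 2 / (4 * π * (T - t)) ^ d := by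
        gcongr; linarith [ht.1]
    _ ≤ heatFlow (T - t) w x := by
        rw [div_le_iff₀' (by positivity)]
        exact hτ₀ (T - t) (by linarith [ht.2])
  have htσ : (1 / 4 : ℝ) ^ |σ| * T ^ σ ≤ t ^ σ :=
    rpow_abs_mul_rpow_le_rpow (by norm_num) hT (by linarith [ht.1]) (by linarith [ht.2]) σ
  calc (1 / 4) ^ |σ| * ((∫ y, w y) / 2) / (4 * π) ^ d * T ^ (σ - d)
      = ((1 / 4) ^ |σ| * T ^ σ) * ((∫ y, w y) / 2 / (4 * π * T) ^ d) := by
        rw [Real.rpow_sub hT, Real.mul_rpow (by positivity : 0 ≤ 4 * π) hT.le]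
        field_simp
    _ ≤ t ^ σ * heatFlow (T - t) w x := by
        have : 0 ≤ t ^ σ := Real.rpow_nonneg (by linarith [ht.1]) σ
        gcongr

lemma not_eventually_le_const_mul_rpow {θ : ℝ} (hθ : θ < 1) (C : ℝ) :
    ¬ ∀ᶠ T : ℝ in atTop, T ≤ C * T ^ θ := by
  intro h
  obtain ⟨T, hle, hlt, hT⟩ := (h.and (((tendsto_rpow_atTop (sub_pos.mpr hθ)).eventually_gt_atTop
    C).and (eventually_gt_atTop 0))).exists
  rw [Real.rpow_sub hT, Real.rpow_one, lt_div_iff₀ (by positivity)] at hlt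
  exact hle.not_gt hlt

lemma subcritical_exponent_lt_one {N p σ : ℝ} (hp : 0 < p)
    (hpc : p * (N - 2 - 2 * σ) < N - 2 * σ) : (σ - N / 2) * (1 / p - 1) < 1 := by
  rw [one_div, ← mul_lt_mul_iff_left₀ hp]
  field_simp
  linarith

end LargeTime

theorem blowup_subcritical_neg_sigma_general {N : ℕ} {σ p : ℝ} (hσ : -1 < σ) (hp : 1 < p)
    (hpc : p * ((N : ℝ) - 2 - 2 * σ) < N - 2 * σ) {w : Eu N → ℝ} (hw : Continuous w)
    (hwb : ∃ W, ∀ x, |w x| ≤ W) (hwI : Integrable w) (hwpos : 0 < ∫ x, w x) (u₀ : Eu N → ℝ) :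
    ¬ ∃ u : ℝ → C₀(Eu N, ℝ), IsGlobalMildSolution N p σ u₀ w u := by
  rintro ⟨u, hu⟩
  obtain ⟨W, hW⟩ := hwb
  obtain ⟨c, hc, hforcing⟩ := exists_forall_mul_rpow_le_rpow_mul_heatFlow hwI hwpos σ 0
  rw [finrank_euclideanSpace, Fintype.card_fin] at hforcing
  refine not_eventually_le_const_mul_rpow
    (subcritical_exponent_lt_one (zero_lt_one.trans hp) hpc)
    (4 * c ^ (1 / p - 1) * ∫ y : ℝ, (|y| ^ p + 1)⁻¹) ?_
  filter_upwards [hforcing, eventually_gt_atTop 0] with T hle hT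
  have hlifespan := (hu.isMildSolution T).sub_le_of_le_rpow_mul_heatFlow hp hσ hw hW
    (by linarith) (by linarith) (by linarith) (by positivity) hle
  rw [Real.mul_rpow hc.le (by positivity), ← Real.rpow_mul hT.le] at hlifespan
  linarith

/-- Blow-up for 1 < p < (N-2σ)/(N-2-2σ), σ ∈ (-1,0): no global mild solution. -/
theorem blowup_subcritical_neg_sigma
    (N : ℕ) (hN : 2 ≤ N) (σ p α : ℝ)
    (hσ : σ ∈ Set.Ioo (-1 : ℝ) 0) (hp1 : 1 < p)
    (hpc : p < ((N : ℝ) - 2 * σ) / ((N : ℝ) - 2 - 2 * σ))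
    (hα : α ∈ Set.Ioo (0 : ℝ) 1)
    (w : Eu N → ℝ) (hwH : IsHolder α w) (hwC : IsC0 w) (hwI : Integrable w)
    (hwpos : 0 < ∫ x, w x)
    (u₀ : Eu N → ℝ) (hu₀ : IsC0 u₀) :
    ¬ ∃ u : ℝ → C₀(Eu N, ℝ), IsGlobalMildSolution N p σ u₀ w u := by
  have hN' : (2 : ℝ) ≤ N := by exact_mod_cast hN
  have hden : 0 < (N : ℝ) - 2 - 2 * σ := by linarith [hσ.2]
  exact blowup_subcritical_neg_sigma_general hσ.1 hp1 ((lt_div_iff₀ hden).mp hpc) hwC.1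
    hwC.exists_abs_le hwI hwpos u₀

end
end

section
/- Let N ≥ 1, p > 1, σ > −1, and let w ∈ L¹(ℝ^N) satisfy ∫_{ℝ^N} w(x) dx > 0. With cutoff functions ξ, η and φ_T as in the context, there exist constants C > 0 and T₀ > 0 such that for every T ≥ T₀, ∫_0^T ∫_{ℝ^N} t^σ w(x) φ_T(t,x) dx dt ≥ C T^{σ+1} ∫_{ℝ^N} w(x) dx. -/
open MeasureTheory Filter Set
open scoped ENNReal NNReal

noncomputable section

/-!
The test function separates variables, and the substitution `t = T * s` gives
`∫₀ᵀ ∫ t ^ σ * w * φ_T = T ^ (σ + 1) * (∫₀¹ s ^ σ * η s ^ (p / (p - 1)) ds) * ∫ w * μ_T`.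
The time factor is positive and does not depend on `T`. The space factor tends to `∫ w` by dominated
convergence, since `μ_T → 1` pointwise, so it eventually exceeds half of this positive limit.
-/

section Measure

variable {X : Type*} [MeasurableSpace X] {μ : Measure X}

theorem setIntegral_pos_of_continuousOn [TopologicalSpace X] [OpensMeasurableSpace X]
    [μ.IsOpenPosMeasure] {U : Set X} {f : X → ℝ} {c : X} (hU : IsOpen U)
    (hf : ContinuousOn f U) (hfi : IntegrableOn f U μ) (hf0 : ∀ x ∈ U, 0 ≤ f x)
    (hcU : c ∈ U) (hc : f c ≠ 0) : 0 < ∫ x in U, f x ∂μ := by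
  have hopen : IsOpen (U ∩ f ⁻¹' {0}ᶜ) := hf.isOpen_inter_preimage hU isOpen_compl_singleton
  rw [setIntegral_pos_iff_support_of_nonneg_ae (ae_restrict_of_forall_mem hU.measurableSet hf0) hfi,
    inter_comm]
  exact hopen.measure_pos μ ⟨c, hcU, hc⟩

theorem tendsto_integral_comp_div_smul_atTop {E : Type*} [NormedAddCommGroup E] [NormedSpace ℝ E]
    {φ : ℝ → ℝ} {ρ : X → ℝ} {w : X → E} {M : ℝ} (hφ : ContinuousOn φ (Ici 0))
    (hφM : ∀ s ∈ Ici (0 : ℝ), |φ s| ≤ M) (hρ : AEMeasurable ρ μ) (hρ0 : ∀ x, 0 ≤ ρ x)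
    (hw : Integrable w μ) :
    Tendsto (fun T : ℝ ↦ ∫ x, φ (ρ x / T) • w x ∂μ) atTop (nhds (φ 0 • ∫ x, w x ∂μ)) := by
  have hdiv_mem {T : ℝ} (hT : 0 < T) (x : X) : ρ x / T ∈ Ici (0 : ℝ) := div_nonneg (hρ0 x) hT.le
  rw [← integral_smul]
  refine tendsto_integral_filter_of_dominated_convergence (fun x ↦ M * ‖w x‖) ?measurable ?bound
    (hw.norm.const_mul M) (Eventually.of_forall fun x ↦ ?lim)
  case measurable =>
    -- `φ` is arbitrary on the negative axis, so it is replaced there by the constant `φ 0`.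
    have hφmax : Continuous fun s ↦ φ (max s 0) :=
      hφ.comp_continuous (by fun_prop) fun s ↦ le_max_right s 0
    filter_upwards [eventually_gt_atTop 0] with T hT
    have hmax : (fun x ↦ φ (max (ρ x / T) 0)) = fun x ↦ φ (ρ x / T) :=
      funext fun x ↦ congrArg φ (max_eq_left (hdiv_mem hT x))
    have hmeas : AEMeasurable (fun x ↦ φ (ρ x / T)) μ :=
      hmax ▸ hφmax.measurable.comp_aemeasurable (hρ.div_const T)
    exact hmeas.aestronglyMeasurable.smul hw.aestronglyMeasurable
  case bound =>
    filter_upwards [eventually_gt_atTop 0] with T hT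
    refine Eventually.of_forall fun x ↦ ?_
    rw [norm_smul]
    exact mul_le_mul_of_nonneg_right (hφM _ (hdiv_mem hT x)) (norm_nonneg _)
  case lim =>
    have hdiv : Tendsto (fun T : ℝ ↦ ρ x / T) atTop (nhdsWithin 0 (Ici 0)) :=
      tendsto_nhdsWithin_iff.2 ⟨tendsto_const_nhds.div_atTop tendsto_id,
        (eventually_gt_atTop 0).mono fun _ hT ↦ hdiv_mem hT x⟩
    exact ((hφ 0 self_mem_Ici).tendsto.comp hdiv).smul_const (w x)

end Measure

theorem integral_rpow_smul_comp_div {E : Type*} [NormedAddCommGroup E] [NormedSpace ℝ E]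
    {T : ℝ} (hT : 0 < T) (σ : ℝ) (f : ℝ → E) :
    ∫ t in (0 : ℝ)..T, t ^ σ • f (t / T) = T ^ (σ + 1) • ∫ s in (0 : ℝ)..1, s ^ σ • f s := by
  have hscale : ∀ t ∈ uIcc 0 T, t ^ σ • f (t / T) = T ^ σ • ((t / T) ^ σ • f (t / T)) := by
    intro t ht
    rw [uIcc_of_le hT.le] at ht
    rw [smul_smul, ← Real.mul_rpow hT.le (div_nonneg ht.1 hT.le), mul_div_cancel₀ _ hT.ne']
  rw [intervalIntegral.integral_congr hscale, intervalIntegral.integral_smul,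
    intervalIntegral.integral_comp_div (fun s ↦ s ^ σ • f s) hT.ne', zero_div, div_self hT.ne',
    smul_smul, Real.rpow_add_one hT.ne']

theorem integral_integral_rpow_mul_comp_div {X : Type*} [MeasurableSpace X] {μ : Measure X}
    {T : ℝ} (hT : 0 < T) (σ : ℝ) (ψ : ℝ → ℝ) (w g : X → ℝ) :
    ∫ t in (0 : ℝ)..T, ∫ x, t ^ σ * w x * (ψ (t / T) * g x) ∂μ =
      T ^ (σ + 1) * (∫ s in (0 : ℝ)..1, s ^ σ * ψ s) * ∫ x, g x * w x ∂μ := by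
  have hinner (t : ℝ) : ∫ x, t ^ σ * w x * (ψ (t / T) * g x) ∂μ =
      t ^ σ * ψ (t / T) * ∫ x, g x * w x ∂μ := by
    rw [← integral_const_mul]
    exact integral_congr_ae (Eventually.of_forall fun x ↦ by ring)
  simp_rw [hinner, intervalIntegral.integral_mul_const]
  exact congrArg (· * _) (integral_rpow_smul_comp_div hT σ ψ)

theorem integral_rpow_mul_pos {σ T c : ℝ} {ψ : ℝ → ℝ} (hσ : -1 < σ)
    (hψ : ContinuousOn ψ (Icc 0 T)) (hψ0 : ∀ s ∈ Ioo 0 T, 0 ≤ ψ s) (hcT : c ∈ Ioo 0 T)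
    (hc : ψ c ≠ 0) : 0 < ∫ s in (0 : ℝ)..T, s ^ σ * ψ s := by
  have hT : 0 ≤ T := (hcT.1.trans hcT.2).le
  have hint : IntervalIntegrable (fun s ↦ s ^ σ * ψ s) volume 0 T :=
    (intervalIntegral.intervalIntegrable_rpow' hσ).mul_continuousOn (by rwa [uIcc_of_le hT])
  have hcont : ContinuousOn (fun s ↦ s ^ σ * ψ s) (Ioo 0 T) :=
    (continuousOn_id.rpow_const fun s hs ↦ Or.inl hs.1.ne').mul (hψ.mono Ioo_subset_Icc_self)
  rw [intervalIntegral.integral_of_le hT, integral_Ioc_eq_integral_Ioo]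
  exact setIntegral_pos_of_continuousOn isOpen_Ioo hcont
    ((intervalIntegrable_iff_integrableOn_Ioo_of_le hT).1 hint)
    (fun s hs ↦ mul_nonneg (Real.rpow_nonneg hs.1.le σ) (hψ0 s hs)) hcT
    (mul_ne_zero (Real.rpow_pos_of_pos hcT.1 σ).ne' hc)

theorem forcing_test_function_lower_bound_general {X : Type*} [MeasurableSpace X] {μ : Measure X}
    {σ q r M c : ℝ} {ξ η : ℝ → ℝ} {ρ w : X → ℝ} (hσ : -1 < σ) (hq : 0 ≤ q) (hr : 0 ≤ r)
    (hξ : ContinuousOn ξ (Ici 0)) (hξM : ∀ s ∈ Ici (0 : ℝ), |ξ s| ≤ M) (hξ0 : 0 < ξ 0)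
    (hη : ContinuousOn η (Icc 0 1)) (hη0 : ∀ s ∈ Ioo (0 : ℝ) 1, 0 ≤ η s)
    (hc : c ∈ Ioo (0 : ℝ) 1) (hηc : η c ≠ 0)
    (hρ : AEMeasurable ρ μ) (hρ0 : ∀ x, 0 ≤ ρ x)
    (hw : Integrable w μ) (hwpos : 0 < ∫ x, w x ∂μ) :
    ∃ C > (0 : ℝ), ∃ T₀ > (0 : ℝ), ∀ T : ℝ, T₀ ≤ T →
      C * T ^ (σ + 1) * ∫ x, w x ∂μ ≤
        ∫ t in (0 : ℝ)..T, ∫ x, t ^ σ * w x * (η (t / T) ^ q * ξ (ρ x / T) ^ r) ∂μ := by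
  set A := ∫ s in (0 : ℝ)..1, s ^ σ * η s ^ q
  have hA : 0 < A := integral_rpow_mul_pos hσ (hη.rpow_const fun _ _ ↦ Or.inr hq)
    (fun s hs ↦ Real.rpow_nonneg (hη0 s hs) q) hc
    (Real.rpow_pos_of_pos ((hη0 c hc).lt_of_ne' hηc) q).ne'
  have hξr : 0 < ξ 0 ^ r := Real.rpow_pos_of_pos hξ0 r
  have hlim : Tendsto (fun T : ℝ ↦ ∫ x, ξ (ρ x / T) ^ r * w x ∂μ) atTop
      (nhds (ξ 0 ^ r * ∫ x, w x ∂μ)) :=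
    tendsto_integral_comp_div_smul_atTop (hξ.rpow_const fun _ _ ↦ Or.inr hr)
      (fun s hs ↦ (Real.abs_rpow_le_abs_rpow _ r).trans
        (Real.rpow_le_rpow (abs_nonneg _) (hξM s hs) hr)) hρ hρ0 hw
  obtain ⟨T₁, hT₁⟩ := eventually_atTop.1
    (hlim.eventually_const_le (half_lt_self (mul_pos hξr hwpos)))
  refine ⟨A * (ξ 0 ^ r / 2), by positivity, max T₁ 1, by positivity, fun T hT ↦ ?_⟩
  have hT0 : 0 < T := one_pos.trans_le ((le_max_right _ _).trans hT)
  calc A * (ξ 0 ^ r / 2) * T ^ (σ + 1) * ∫ x, w x ∂μ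
      = T ^ (σ + 1) * A * ((ξ 0 ^ r * ∫ x, w x ∂μ) / 2) := by ring
    _ ≤ T ^ (σ + 1) * A * ∫ x, ξ (ρ x / T) ^ r * w x ∂μ := by
        gcongr
        exact hT₁ T ((le_max_left _ _).trans hT)
    _ = _ := (integral_integral_rpow_mul_comp_div hT0 σ (fun s ↦ η s ^ q) w _).symm

/-- Lower bound for the forcing term tested against the rescaled test function
φ_T(t,x) = η(t/T)^{p/(p−1)} ξ(|x|²/T)^{2p/(p−1)}:
∫₀ᵀ∫ t^σ w(x) φ_T(t,x) dx dt ≥ C T^{σ+1} ∫ w for large T. -/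
theorem forcing_test_function_lower_bound
    (N : ℕ) (hN : 1 ≤ N) (p σ : ℝ) (hp1 : 1 < p) (hσ : -1 < σ)
    (ξ : ℝ → ℝ) (hξsm : ContDiffOn ℝ (⊤ : ℕ∞) ξ (Set.Ici 0))
    (hξ01 : ∀ s ∈ Set.Ici (0 : ℝ), ξ s ∈ Set.Icc (0 : ℝ) 1)
    (hξ1 : ∀ s ∈ Set.Icc (0 : ℝ) 1, ξ s = 1)
    (hξ0 : ∀ s ∈ Set.Ici (2 : ℝ), ξ s = 0)
    (η : ℝ → ℝ) (hηsm : ContDiffOn ℝ (⊤ : ℕ∞) η (Set.Ici 0))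
    (hηpos : ∀ s, 0 ≤ η s) (hηne : ∃ s, η s ≠ 0)
    (hηsupp : Function.support η ⊆ Set.Ioo 0 1)
    (w : Eu N → ℝ) (hwI : Integrable w) (hwpos : 0 < ∫ x, w x) :
    ∃ C > (0 : ℝ), ∃ T₀ > (0 : ℝ), ∀ T : ℝ, T₀ ≤ T →
      C * T ^ (σ + 1) * ∫ x, w x ≤
        ∫ t in (0 : ℝ)..T, ∫ x : Eu N,
          t ^ σ * w x * (η (t / T) ^ (p / (p - 1)) * ξ (‖x‖ ^ 2 / T) ^ (2 * p / (p - 1))) := by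
  obtain ⟨c, hc⟩ := hηne
  exact forcing_test_function_lower_bound_general hσ
    (div_nonneg (by linarith) (by linarith)) (div_nonneg (by linarith) (by linarith))
    hξsm.continuousOn (fun s hs ↦ (abs_of_nonneg (hξ01 s hs).1).trans_le (hξ01 s hs).2)
    (by simp [hξ1]) (hηsm.continuousOn.mono Icc_subset_Ici_self) (fun s _ ↦ hηpos s)
    (hηsupp hc) hc (by fun_prop) (fun x ↦ sq_nonneg ‖x‖) hwI hwpos

end
end

section
/- Let N ≥ 1 and p > 1, and let ξ, η, η_T, μ_T, φ_T be as in the context. There exists a constant C > 0, depending only on N, p, ξ and η, such that for every T > 0, ∫_0^T ∫_{ℝ^N} φ_T(t,x)^{−1/(p−1)} |Δ_x φ_T(t,x)|^{p/(p−1)} dx dt ≤ C T^{1 + N/2 − p/(p−1)}, where the integrand is interpreted as 0 at points where φ_T vanishes. -/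
open MeasureTheory Filter Set
open scoped ENNReal NNReal

noncomputable section

/-- The Laplacian of a function on ℝ^N, as the sum of second derivatives in the
coordinate directions. -/
noncomputable def lap {N : ℕ} (f : Eu N → ℝ) (x : Eu N) : ℝ :=
  ∑ i : Fin N, iteratedFDeriv ℝ 2 f x (fun _ : Fin 2 => EuclideanSpace.single i (1 : ℝ))

/-!
By the chain rule `Δ (ξ(|x|²/T)^r) = ξ(|x|²/T)^(r-2) G(|x|²/T) / T` with `G` continuous on `[0, ∞)`.
Put `q = p/(p-1)`, so that `1 - q = -1/(p-1)`. For `r = 2q` the power of `ξ` pulled out of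
`|Δφ_T|^q` cancels the weight `φ_T^(1-q)` exactly, and the integrand equals
`(η(t/T) |G(|x|²/T)| / T)^q` wherever `φ_T ≠ 0`. If `ξ` vanishes on `[R, ∞)`, it is
thus at most `(C/T)^q` and lives on `(0, T) × {|x|² ≤ RT}`, a set of measure proportional to
`T^(1 + N/2)`.
-/

open InnerProductSpace Laplacian Module Metric

theorem lap_eq_laplacian {N : ℕ} (f : Eu N → ℝ) : lap f = Δ f := by
  rw [laplacian_eq_iteratedFDeriv_orthonormalBasis f (EuclideanSpace.basisFun (Fin N) ℝ)]
  funext x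
  refine Finset.sum_congr rfl fun i _ => congrArg _ (funext fun j => ?_)
  fin_cases j <;> simp

/-- The test function `φ_T(t, x) = η(t/T)^q ξ(|x|²/T)^(2q)`, where `q = p/(p-1)`. -/
def testFunction {E : Type*} [Norm E] (η ξ : ℝ → ℝ) (q T t : ℝ) (x : E) : ℝ :=
  η (t / T) ^ q * ξ (‖x‖ ^ 2 / T) ^ (2 * q)

section Measure

variable {E : Type*} [NormedAddCommGroup E] [NormedSpace ℝ E] [FiniteDimensional ℝ E]
  [MeasurableSpace E] [BorelSpace E] (μ : Measure E) [μ.IsAddHaarMeasure]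

theorem lintegral_Ioo_indicator_closedBall_sqrt (R : ℝ) {T c : ℝ} (hT : 0 ≤ T) (hc : 0 ≤ c) :
    ∫⁻ _ in Ioo 0 T, ∫⁻ x, ENNReal.ofReal ((closedBall 0 √(R * T)).indicator (fun _ => c) x) ∂μ =
      ENNReal.ofReal (√R ^ finrank ℝ E * μ.real (ball 0 1) *
        (T * T ^ ((finrank ℝ E : ℝ) / 2) * c)) := by
  have hsqrt : √T ^ finrank ℝ E = T ^ ((finrank ℝ E : ℝ) / 2) := by
    rw [Real.sqrt_eq_rpow, ← Real.rpow_mul_natCast hT]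
    ring_nf
  have hball : ∫⁻ x, ENNReal.ofReal ((closedBall 0 √(R * T)).indicator (fun _ => c) x) ∂μ =
      ENNReal.ofReal (c * (√(R * T) ^ finrank ℝ E * μ.real (ball 0 1))) := by
    have hcomp : (fun x => ENNReal.ofReal ((closedBall 0 √(R * T)).indicator (fun _ => c) x)) =
        (closedBall (0 : E) √(R * T)).indicator fun _ => ENNReal.ofReal c :=
      (indicator_comp_of_zero ENNReal.ofReal_zero).symm
    rw [hcomp, lintegral_indicator_const isClosed_closedBall.measurableSet,
      Measure.addHaar_closedBall μ 0 (Real.sqrt_nonneg _), ENNReal.ofReal_mul hc,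
      ENNReal.ofReal_mul (by positivity), ofReal_measureReal]
  rw [hball, setLIntegral_const, Real.volume_Ioo, sub_zero, ← ENNReal.ofReal_mul (by positivity),
    Real.sqrt_mul' R hT, mul_pow, hsqrt]
  ring_nf

end Measure

variable {E : Type*} [NormedAddCommGroup E] [InnerProductSpace ℝ E]

section Radial

variable {F : ℝ → ℝ} {T : ℝ} {x : E}

theorem hasFDerivAt_comp_norm_sq_div {F' : ℝ} (hT : 0 ≤ T)
    (hF : HasDerivWithinAt F F' (Ici 0) (‖x‖ ^ 2 / T)) :
    HasFDerivAt (fun y : E => F (‖y‖ ^ 2 / T)) ((2 * F' / T) • innerSL ℝ x) x := by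
  have hsq : HasFDerivAt (fun y : E => ‖y‖ ^ 2 / T) (T⁻¹ • (2 • innerSL ℝ x)) x := by
    simpa only [div_eq_mul_inv] using (hasStrictFDerivAt_norm_sq x).hasFDerivAt.mul_const T⁻¹
  refine (hF.comp_hasFDerivAt x hsq (.of_forall fun y => ?_)).congr_fderiv ?_
  · exact div_nonneg (sq_nonneg _) hT
  · ext v
    simp only [smul_apply, coe_innerSL_apply, nsmul_eq_mul, Nat.cast_ofNat, smul_eq_mul]
    ring

theorem laplacian_comp_norm_sq_div [FiniteDimensional ℝ E] {F' : ℝ → ℝ} {F'' : ℝ} (hT : 0 ≤ T)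
    (hF : ∀ s ∈ Ici (0 : ℝ), HasDerivWithinAt F (F' s) (Ici 0) s)
    (hF' : HasDerivWithinAt F' F'' (Ici 0) (‖x‖ ^ 2 / T)) :
    Δ (fun y : E => F (‖y‖ ^ 2 / T)) x =
      (4 * (‖x‖ ^ 2 / T) * F'' + 2 * finrank ℝ E * F' (‖x‖ ^ 2 / T)) / T := by
  -- `innerSL` is typed as conjugate-linear in its first argument; over `ℝ` it is bilinear.
  let J : E →L[ℝ] E →L[ℝ] ℝ := innerSL ℝ
  have hJ (u v : E) : J u v = inner ℝ u v := rfl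
  have hgrad : fderiv ℝ (fun y : E => F (‖y‖ ^ 2 / T)) =
      (fun y : E => 2 * F' (‖y‖ ^ 2 / T) / T) • ⇑J := by
    funext y
    exact (hasFDerivAt_comp_norm_sq_div hT (hF _ (div_nonneg (sq_nonneg _) hT))).fderiv
  have hhess := ((hasFDerivAt_comp_norm_sq_div hT ((hF'.const_mul 2).div_const T)).smul
    J.hasFDerivAt).fderiv
  have hdir (v : E) : iteratedFDeriv ℝ 2 (fun y : E => F (‖y‖ ^ 2 / T)) x ![v, v] =
      4 * F'' / T ^ 2 * inner ℝ x v ^ 2 + 2 * F' (‖x‖ ^ 2 / T) / T * inner ℝ v v := by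
    rw [iteratedFDeriv_two_apply, hgrad, hhess]
    simp only [Matrix.cons_val_zero, Matrix.cons_val_one, Matrix.cons_val_fin_one, add_apply,
      smul_apply, ContinuousLinearMap.smulRight_apply, coe_innerSL_apply, smul_eq_mul, hJ]
    ring
  simp only [laplacian_eq_iteratedFDeriv_stdOrthonormalBasis, hdir, Finset.sum_add_distrib,
    ← Finset.mul_sum, OrthonormalBasis.sum_sq_inner_left, OrthonormalBasis.inner_eq_one,
    Finset.sum_const, Finset.card_univ, Fintype.card_fin, nsmul_eq_mul]
  ring

end Radial

section LapPowProfile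

variable {ξ : ℝ → ℝ}

/-- The function `G` with `Δ (ξ(|x|²)^r) = ξ(|x|²)^(r-2) * G(|x|²)` in dimension `n`. The
derivatives of `ξ` are taken within `[0, ∞)`: its values at negative arguments are irrelevant. -/
def lapPowProfile (ξ : ℝ → ℝ) (r : ℝ) (n : ℕ) (s : ℝ) : ℝ :=
  4 * s * (r * ξ s * derivWithin (derivWithin ξ (Ici 0)) (Ici 0) s +
    r * (r - 1) * derivWithin ξ (Ici 0) s ^ 2) + 2 * n * (r * ξ s * derivWithin ξ (Ici 0) s)

theorem continuousOn_lapPowProfile (hξ : ContDiffOn ℝ 2 ξ (Ici 0)) (r : ℝ) (n : ℕ) :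
    ContinuousOn (lapPowProfile ξ r n) (Ici 0) := by
  have hξ₀ : ContinuousOn ξ (Ici 0) := hξ.continuousOn
  have hξ₁ : ContDiffOn ℝ 1 (derivWithin ξ (Ici 0)) (Ici 0) :=
    hξ.derivWithin (uniqueDiffOn_Ici 0) one_add_one_eq_two.le
  have hξ₁' := hξ₁.continuousOn
  have hξ₂ : ContinuousOn (derivWithin (derivWithin ξ (Ici 0)) (Ici 0)) (Ici 0) :=
    hξ₁.continuousOn_derivWithin (uniqueDiffOn_Ici 0) le_rfl
  unfold lapPowProfile
  fun_prop

theorem laplacian_const_mul_rpow_comp_norm_sq_div [FiniteDimensional ℝ E] {r T : ℝ} {x : E}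
    (hξ : ContDiffOn ℝ 2 ξ (Ici 0)) (hr : 2 ≤ r) (hT : 0 ≤ T) (hξx : 0 ≤ ξ (‖x‖ ^ 2 / T))
    (A : ℝ) :
    Δ (fun y : E => A * ξ (‖y‖ ^ 2 / T) ^ r) x =
      A * (ξ (‖x‖ ^ 2 / T) ^ (r - 2) * (lapPowProfile ξ r (finrank ℝ E) (‖x‖ ^ 2 / T) / T)) := by
  have hξ₁ : ContDiffOn ℝ 1 (derivWithin ξ (Ici 0)) (Ici 0) :=
    hξ.derivWithin (uniqueDiffOn_Ici 0) one_add_one_eq_two.le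
  have hd₁ (s : ℝ) (hs : s ∈ Ici (0 : ℝ)) : HasDerivWithinAt ξ _ (Ici 0) s :=
    (hξ.differentiableOn two_ne_zero s hs).hasDerivWithinAt
  have hd₂ (s : ℝ) (hs : s ∈ Ici (0 : ℝ)) : HasDerivWithinAt (derivWithin ξ (Ici 0)) _ (Ici 0) s :=
    (hξ₁.differentiableOn one_ne_zero s hs).hasDerivWithinAt
  have hx : ‖x‖ ^ 2 / T ∈ Ici (0 : ℝ) := div_nonneg (sq_nonneg _) hT
  rw [laplacian_comp_norm_sq_div (F := fun s => A * ξ s ^ r) hT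
    (fun s hs => ((hd₁ s hs).rpow_const (.inr (by linarith))).const_mul A)
    ((((hd₂ _ hx).mul_const r).mul ((hd₁ _ hx).rpow_const (.inr (by linarith)))).const_mul A)]
  have hpow : ξ (‖x‖ ^ 2 / T) ^ (r - 1) = ξ (‖x‖ ^ 2 / T) ^ (r - 2) * ξ (‖x‖ ^ 2 / T) := by
    rw [← Real.rpow_add_one' hξx (by linarith)]
    ring_nf
  rw [hpow, sub_sub, one_add_one_eq_two, lapPowProfile]
  ring

end LapPowProfile

theorem rpow_one_sub_mul_abs_rpow {a z : ℝ} (ha : 0 < a) (hz : 0 < z) (q g : ℝ) :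
    (a ^ q * z ^ (2 * q)) ^ (1 - q) * |a ^ q * (z ^ (2 * q - 2) * g)| ^ q = (a * |g|) ^ q := by
  have ha' : (a ^ q) ^ (1 - q) * (a ^ q) ^ q = a ^ q := by
    rw [← Real.rpow_add (by positivity), sub_add_cancel, Real.rpow_one]
  have hz' : (z ^ (2 * q)) ^ (1 - q) * (z ^ (2 * q - 2)) ^ q = 1 := by
    rw [← Real.rpow_mul hz.le, ← Real.rpow_mul hz.le, ← Real.rpow_add hz]
    ring_nf
    exact Real.rpow_zero z
  rw [abs_mul, abs_mul, abs_of_pos (Real.rpow_pos_of_pos ha q),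
    abs_of_pos (Real.rpow_pos_of_pos hz _), Real.mul_rpow (by positivity) (by positivity),
    Real.mul_rpow (by positivity) (by positivity), Real.mul_rpow (by positivity) (by positivity),
    Real.mul_rpow ha.le (abs_nonneg g)]
  linear_combination |g| ^ q * ((z ^ (2 * q)) ^ (1 - q) * (z ^ (2 * q - 2)) ^ q * ha' + a ^ q * hz')

variable [FiniteDimensional ℝ E]

section WeightedLaplacian

/-- The integrand `φ^(-1/(p-1)) |Δφ|^(p/(p-1))` in terms of `q = p/(p-1)`, set to `0` where
`φ` vanishes. -/
def weightedLaplacian (q : ℝ) (φ : E → ℝ) (x : E) : ℝ :=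
  if φ x = 0 then 0 else φ x ^ (1 - q) * |Δ φ x| ^ q

variable {η ξ : ℝ → ℝ} {q R T t : ℝ}

theorem weightedLaplacian_testFunction {x : E} (hξ : ContDiffOn ℝ 2 ξ (Ici 0)) (hq : 1 ≤ q)
    (hT : 0 ≤ T) (hη : 0 < η (t / T)) (hξx : 0 < ξ (‖x‖ ^ 2 / T)) :
    weightedLaplacian q (testFunction η ξ q T t) x =
      (η (t / T) * |lapPowProfile ξ (2 * q) (finrank ℝ E) (‖x‖ ^ 2 / T) / T|) ^ q := by
  have hΔ := laplacian_const_mul_rpow_comp_norm_sq_div hξ (by linarith : 2 ≤ 2 * q) hT hξx.le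
    (η (t / T) ^ q)
  unfold weightedLaplacian testFunction
  rw [if_neg (by positivity), hΔ, rpow_one_sub_mul_abs_rpow hη hξx]

variable (E) in
theorem exists_weightedLaplacian_testFunction_le (hq : 1 ≤ q) (hξ : ContDiffOn ℝ 2 ξ (Ici 0))
    (hξ_nonneg : ∀ s ∈ Ici (0 : ℝ), 0 ≤ ξ s) (hξ_zero : ∀ s ∈ Ici R, ξ s = 0)
    (hη_nonneg : ∀ s ∈ Ioo (0 : ℝ) 1, 0 ≤ η s) (hη_bdd : BddAbove (η '' Ioo 0 1)) :
    ∃ C ≥ (0 : ℝ), ∀ T > 0, ∀ t ∈ Ioo 0 T, ∀ x : E,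
      weightedLaplacian q (testFunction η ξ q T t) x ≤
        (closedBall 0 √(R * T)).indicator (fun _ => (C / T) ^ q) x := by
  obtain ⟨M, hM⟩ := hη_bdd
  have hG : ContinuousOn (lapPowProfile ξ (2 * q) (finrank ℝ E)) (Icc 0 R) :=
    (continuousOn_lapPowProfile hξ _ _).mono Icc_subset_Ici_self
  obtain ⟨B, hB⟩ := isCompact_Icc.exists_bound_of_continuousOn hG
  refine ⟨|M| * |B|, by positivity, fun T hT t ht x => ?_⟩
  have hs : 0 ≤ ‖x‖ ^ 2 / T := by positivity
  have htT : t / T ∈ Ioo (0 : ℝ) 1 := ⟨div_pos ht.1 hT, (div_lt_one hT).2 ht.2⟩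
  by_cases hφ : testFunction η ξ q T t x = 0
  · rw [weightedLaplacian, if_pos hφ]
    exact indicator_nonneg (fun _ _ => by positivity) x
  have hη : 0 < η (t / T) := (hη_nonneg _ htT).lt_of_ne' fun h => hφ <| by
    rw [testFunction, h, Real.zero_rpow (by linarith), zero_mul]
  have hξx : 0 < ξ (‖x‖ ^ 2 / T) := (hξ_nonneg _ hs).lt_of_ne' fun h => hφ <| by
    rw [testFunction, h, Real.zero_rpow (by linarith), mul_zero]
  have hsR : ‖x‖ ^ 2 / T ≤ R := by
    by_contra! h
    exact hξx.ne' (hξ_zero _ h.le)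
  have hx : x ∈ closedBall 0 √(R * T) :=
    mem_closedBall_zero_iff.2 (Real.le_sqrt_of_sq_le ((div_le_iff₀ hT).1 hsR))
  have hη_le : η (t / T) ≤ |M| := (hM (mem_image_of_mem η htT)).trans (le_abs_self M)
  have hG_le : |lapPowProfile ξ (2 * q) (finrank ℝ E) (‖x‖ ^ 2 / T)| ≤ |B| :=
    (hB _ ⟨hs, hsR⟩).trans (le_abs_self B)
  rw [indicator_of_mem hx, weightedLaplacian_testFunction hξ hq hT.le hη hξx, abs_div,
    abs_of_pos hT, ← mul_div_assoc]
  gcongr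

end WeightedLaplacian

variable [MeasurableSpace E] [BorelSpace E] (μ : Measure E) [μ.IsAddHaarMeasure]

theorem exists_lintegral_weightedLaplacian_testFunction_le {q R : ℝ} {η ξ : ℝ → ℝ} (hq : 1 ≤ q)
    (hξ : ContDiffOn ℝ 2 ξ (Ici 0)) (hξ_nonneg : ∀ s ∈ Ici (0 : ℝ), 0 ≤ ξ s)
    (hξ_zero : ∀ s ∈ Ici R, ξ s = 0)
    (hη_nonneg : ∀ s ∈ Ioo (0 : ℝ) 1, 0 ≤ η s) (hη_bdd : BddAbove (η '' Ioo 0 1)) :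
    ∃ C > (0 : ℝ), ∀ T : ℝ, 0 < T →
      ∫⁻ t in Ioo 0 T, ∫⁻ x, ENNReal.ofReal (weightedLaplacian q (testFunction η ξ q T t) x) ∂μ ≤
        ENNReal.ofReal (C * T ^ (1 + (finrank ℝ E : ℝ) / 2 - q)) := by
  obtain ⟨C, hC, hle⟩ :=
    exists_weightedLaplacian_testFunction_le E hq hξ hξ_nonneg hξ_zero hη_nonneg hη_bdd
  set V := √R ^ finrank ℝ E * μ.real (ball 0 1)
  refine ⟨V * C ^ q + 1, by positivity, fun T hT => ?_⟩
  calc ∫⁻ t in Ioo 0 T, ∫⁻ x, ENNReal.ofReal (weightedLaplacian q (testFunction η ξ q T t) x) ∂μ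
      ≤ ∫⁻ _ in Ioo 0 T, ∫⁻ x, ENNReal.ofReal
          ((closedBall 0 √(R * T)).indicator (fun _ => (C / T) ^ q) x) ∂μ :=
        setLIntegral_mono' measurableSet_Ioo fun t ht => lintegral_mono fun x =>
          ENNReal.ofReal_le_ofReal (hle T hT t ht x)
    _ = ENNReal.ofReal (V * (T * T ^ ((finrank ℝ E : ℝ) / 2) * (C / T) ^ q)) :=
        lintegral_Ioo_indicator_closedBall_sqrt μ R hT.le (by positivity)
    _ = ENNReal.ofReal (V * C ^ q * T ^ (1 + (finrank ℝ E : ℝ) / 2 - q)) := by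
        rw [Real.div_rpow hC hT.le, Real.rpow_sub hT, Real.rpow_add hT, Real.rpow_one]
        ring_nf
    _ ≤ ENNReal.ofReal ((V * C ^ q + 1) * T ^ (1 + (finrank ℝ E : ℝ) / 2 - q)) := by
        gcongr
        exact le_add_of_nonneg_right zero_le_one

theorem I1_estimate_general {p R : ℝ} (hp : 1 < p) {ξ η : ℝ → ℝ}
    (hξ : ContDiffOn ℝ 2 ξ (Ici 0)) (hξ_nonneg : ∀ s ∈ Ici (0 : ℝ), 0 ≤ ξ s)
    (hξ_zero : ∀ s ∈ Ici R, ξ s = 0)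
    (hη_nonneg : ∀ s ∈ Ioo (0 : ℝ) 1, 0 ≤ η s) (hη_bdd : BddAbove (η '' Ioo 0 1))
    {φT : ℝ → ℝ → E → ℝ}
    (hφT : ∀ T t x, φT T t x = η (t / T) ^ (p / (p - 1)) * ξ (‖x‖ ^ 2 / T) ^ (2 * p / (p - 1))) :
    ∃ C > (0 : ℝ), ∀ T : ℝ, 0 < T →
      (∫⁻ t in Ioo (0 : ℝ) T, ∫⁻ x, ENNReal.ofReal
          (if φT T t x = 0 then 0
           else φT T t x ^ (-(1 : ℝ) / (p - 1)) * |Δ (φT T t) x| ^ (p / (p - 1))) ∂μ)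
        ≤ ENNReal.ofReal (C * T ^ (1 + (finrank ℝ E : ℝ) / 2 - p / (p - 1))) := by
  have hp' : 0 < p - 1 := sub_pos.2 hp
  have hq : 1 ≤ p / (p - 1) := (one_le_div hp').2 (by linarith)
  have hweight : -(1 : ℝ) / (p - 1) = 1 - p / (p - 1) := by
    field_simp
    ring
  obtain rfl : φT = testFunction η ξ (p / (p - 1)) := by
    funext T t x
    rw [hφT, testFunction, mul_div_assoc]
  rw [hweight]
  exact exists_lintegral_weightedLaplacian_testFunction_le μ hq hξ hξ_nonneg hξ_zero
    hη_nonneg hη_bdd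

/-- Estimate on I₁(T) = ∫₀ᵀ∫ φ_T^{−1/(p−1)} |Δ_x φ_T|^{p/(p−1)} dx dt ≤ C T^{1+N/2−p/(p−1)},
where φ_T(t,x) = η(t/T)^{p/(p−1)} ξ(|x|²/T)^{2p/(p−1)} and the integrand is interpreted
as 0 where φ_T vanishes. -/
theorem I1_estimate
    (N : ℕ) (hN : 1 ≤ N) (p : ℝ) (hp1 : 1 < p)
    (ξ : ℝ → ℝ) (hξsm : ContDiffOn ℝ (⊤ : ℕ∞) ξ (Set.Ici 0))
    (hξ01 : ∀ s ∈ Set.Ici (0 : ℝ), ξ s ∈ Set.Icc (0 : ℝ) 1)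
    (hξ1 : ∀ s ∈ Set.Icc (0 : ℝ) 1, ξ s = 1)
    (hξ0 : ∀ s ∈ Set.Ici (2 : ℝ), ξ s = 0)
    (η : ℝ → ℝ) (hηsm : ContDiffOn ℝ (⊤ : ℕ∞) η (Set.Ici 0))
    (hηpos : ∀ s, 0 ≤ η s) (hηne : ∃ s, η s ≠ 0)
    (hηsupp : Function.support η ⊆ Set.Ioo 0 1)
    (φT : ℝ → ℝ → Eu N → ℝ)
    (hφT : ∀ T t x, φT T t x = η (t / T) ^ (p / (p - 1)) * ξ (‖x‖ ^ 2 / T) ^ (2 * p / (p - 1))) :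
    ∃ C > (0 : ℝ), ∀ T : ℝ, 0 < T →
      (∫⁻ t in Set.Ioo (0 : ℝ) T, ∫⁻ x : Eu N, ENNReal.ofReal
          (if φT T t x = 0 then 0
           else φT T t x ^ (-(1 : ℝ) / (p - 1)) * |lap (φT T t) x| ^ (p / (p - 1))))
        ≤ ENNReal.ofReal (C * T ^ (1 + (N : ℝ) / 2 - p / (p - 1))) := by
  simpa only [lap_eq_laplacian, finrank_euclideanSpace_fin] using
    I1_estimate_general volume hp1 (hξsm.of_le (by norm_cast)) (fun s hs => (hξ01 s hs).1)
      hξ0 (fun s _ => hηpos s)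
      ((isCompact_Icc.bddAbove_image (hηsm.continuousOn.mono Icc_subset_Ici_self)).mono
        (image_mono Ioo_subset_Icc_self)) hφT

end
end

section
/- Let N ≥ 2, p > 1, σ > −1, u_0 ∈ C_0(ℝ^N), and let w ∈ C_0(ℝ^N) ∩ L¹(ℝ^N) with ∫_{ℝ^N} w(x) dx > 0. Suppose u : [0,∞) × ℝ^N → ℝ is continuous, is continuously differentiable in t and twice continuously differentiable in x on (0,∞) × ℝ^N, satisfies ∂_t u = Δu + |u|^p + t^σ w(x) on (0,∞) × ℝ^N, and u(0,·) = u_0. Then there exist constants C > 0 and T₀ > 0 such that for all T ≥ T₀, ∫_{ℝ^N} w(x) dx ≤ C T^{N/2 − σ − p/(p−1)}. -/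
open MeasureTheory Filter Set
open scoped ENNReal NNReal

noncomputable section

/-!
Testing the equation at time scale `T` and space scale `√T` against the power `η ^ (k + 2)` of a
parabolically rescaled cutoff, and absorbing `u · (∂_t + Δ) (η ^ (k + 2))` into
`|u| ^ p * η ^ (k + 2)` by Young's inequality, bounds `∫ η ^ (k + 2) t ^ σ w` from above by the
size of the error term in Young's inequality; its left-hand side behaves like
`T ^ (σ + 1) * ∫ w` as `T → ∞`. Rescaling `u` instead of the test function keeps `η` fixed.

The derivatives of `u` are only known to be continuous in `t` and in `x` separately, so integrating
by parts in space-time is not immediate. Instead `-u` is regularized by sup-convolution. The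
regularization satisfies the same differential inequality up to a small error, in the sense of lower
limits of difference quotients, and it is semiconvex, so that its difference quotients are bounded
from below. Summation by parts for the difference quotients and dominated convergence for their
truncations from above then give the inequality in weak form.
-/

open scoped Topology

section ParabolicDifferences

variable {E ι : Type*} [NormedAddCommGroup E] [Fintype ι]

/-- A bound for the steps taken by the difference operator `parabolicDiff a b r` defined below:
for `r ≤ 1` they all have norm at most `r * stepRadius a b`. -/
def stepRadius (a : ι → E) (b : E) : ℝ := ‖b‖ + ∑ i, ‖a i‖

theorem stepRadius_nonneg {a : ι → E} {b : E} : 0 ≤ stepRadius a b := by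
  unfold stepRadius; positivity

variable [NormedSpace ℝ E]

theorem exists_second_difference_eq {f f' f'' : ℝ → ℝ} {r : ℝ} (hr : 0 < r)
    (hf : ∀ z, HasDerivAt f (f' z) z) (hf' : ∀ z, HasDerivAt f' (f'' z) z) :
    ∃ ξ ∈ Ioo 0 r, f r + f (-r) - 2 * f 0 = r ^ 2 * ((f'' ξ + f'' (-ξ)) / 2) := by
  have hF (z : ℝ) : HasDerivAt (fun s => f s + f (-s)) (f' z - f' (-z)) z :=
    ((hf z).add ((hf (-z)).comp z (hasDerivAt_neg z))).congr_deriv (by ring)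
  have hF' (z : ℝ) : HasDerivAt (fun s => f' s - f' (-s)) (f'' z + f'' (-z)) z :=
    ((hf' z).sub ((hf' (-z)).comp z (hasDerivAt_neg z))).congr_deriv (by ring)
  obtain ⟨η, hη, hFη⟩ := exists_ratio_hasDerivAt_eq_ratio_slope _ _ hr
    (fun z _ => (hF z).continuousAt.continuousWithinAt) (fun z _ => hF z)
    (fun s => s ^ 2) _ (continuous_pow 2).continuousOn (fun z _ => hasDerivAt_pow 2 z)
  obtain ⟨ξ, hξ, hFξ⟩ := exists_hasDerivAt_eq_slope _ _ hη.1
    (fun z _ => (hF' z).continuousAt.continuousWithinAt) (fun z _ => hF' z)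
  refine ⟨ξ, ⟨hξ.1, hξ.2.trans hη.2⟩, ?_⟩
  have hη0 := hη.1.ne'
  simp only [neg_zero, sub_self, sub_zero] at hFη hFξ
  rw [eq_div_iff hη0] at hFξ
  rw [← hFξ] at hFη
  refine mul_right_cancel₀ hη0 ?_
  push_cast at hFη
  linear_combination (-1 / 2 : ℝ) * hFη

theorem exists_second_difference_eq_fderiv {f : E → ℝ} (hf : ContDiff ℝ 2 f) (q a : E) {r : ℝ}
    (hr : 0 < r) :
    ∃ ξ ∈ Ioo 0 r, f (q + r • a) - f q + (f (q - r • a) - f q) =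
      r ^ 2 * ((fderiv ℝ (fderiv ℝ f) (q + ξ • a) a a +
        fderiv ℝ (fderiv ℝ f) (q - ξ • a) a a) / 2) := by
  have hline (z : ℝ) : HasDerivAt (fun s : ℝ => q + s • a) a z := by
    simpa using ((hasDerivAt_id z).smul_const a).const_add q
  have hf1 : ContDiff ℝ 1 (fderiv ℝ f) := hf.fderiv_right (by norm_num)
  have hD (z : ℝ) : HasDerivAt (fun s : ℝ => f (q + s • a)) (fderiv ℝ f (q + z • a) a) z :=
    ((hf.differentiable (by norm_num)) _).hasFDerivAt.comp_hasDerivAt z (hline z)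
  have hD' (z : ℝ) : HasDerivAt (fun s : ℝ => fderiv ℝ f (q + s • a) a)
      (fderiv ℝ (fderiv ℝ f) (q + z • a) a a) z := by
    simpa using (((hf1.differentiable (by norm_num)) _).hasFDerivAt.comp_hasDerivAt z
      (hline z)).clm_apply (hasDerivAt_const z a)
  obtain ⟨ξ, hξ, h⟩ := exists_second_difference_eq hr hD hD'
  refine ⟨ξ, hξ, ?_⟩
  simp only [neg_smul, ← sub_eq_add_neg, zero_smul, add_zero] at h
  linarith

theorem continuous_fderiv_fderiv_apply {f : E → ℝ} (hf : ContDiff ℝ 2 f) (a : E) :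
    Continuous fun q => fderiv ℝ (fderiv ℝ f) q a a :=
  (((hf.fderiv_right (m := 1) (by norm_num)).continuous_fderiv (by norm_num)).clm_apply
    continuous_const).clm_apply continuous_const

theorem tendsto_second_difference {f : E → ℝ} (hf : ContDiff ℝ 2 f) (q a : E) :
    Tendsto (fun r : ℝ => (f (q + r • a) - f q + (f (q - r • a) - f q)) / r ^ 2) (𝓝[>] 0)
      (𝓝 (fderiv ℝ (fderiv ℝ f) q a a)) := by
  choose! ξ hξ hdiff using fun r (hr : 0 < r) => exists_second_difference_eq_fderiv hf q a hr
  have hξ0 : Tendsto ξ (𝓝[>] 0) (𝓝 0) := by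
    refine tendsto_of_tendsto_of_tendsto_of_le_of_le' tendsto_const_nhds
      (tendsto_nhdsWithin_of_tendsto_nhds tendsto_id) ?_ ?_
    all_goals filter_upwards [self_mem_nhdsWithin] with r hr
    exacts [(hξ r hr).1.le, (hξ r hr).2.le]
  have hcont : Continuous fun s : ℝ => (fderiv ℝ (fderiv ℝ f) (q + s • a) a a +
      fderiv ℝ (fderiv ℝ f) (q - s • a) a a) / 2 := by
    have := continuous_fderiv_fderiv_apply hf a
    exact ((this.comp (by fun_prop)).add (this.comp (by fun_prop))).div_const 2
  have hlim := (hcont.tendsto 0).comp hξ0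
  simp only [zero_smul, add_zero, sub_zero, add_self_div_two] at hlim
  refine hlim.congr' ?_
  filter_upwards [self_mem_nhdsWithin] with r (hr : 0 < r)
  rw [hdiff r hr, mul_div_cancel_left₀ _ (by positivity), Function.comp_apply]

theorem tendsto_sq_nhdsGT_zero : Tendsto (fun r : ℝ => r ^ 2) (𝓝[>] 0) (𝓝[>] 0) := by
  refine tendsto_nhdsWithin_iff.2 ⟨tendsto_nhdsWithin_of_tendsto_nhds ?_, ?_⟩
  · simpa using (continuous_pow 2).tendsto (0 : ℝ)
  · filter_upwards [self_mem_nhdsWithin] with r (hr : 0 < r) using pow_pos hr 2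

theorem tendsto_drift_difference {f : E → ℝ} {d : ℝ} {q b : E} (hf : HasLineDerivAt ℝ f d q b) :
    Tendsto (fun r : ℝ => (f (q + r ^ 2 • b) - f q) / r ^ 2) (𝓝[>] 0) (𝓝 d) :=
  (hf.tendsto_slope_zero_right.comp tendsto_sq_nhdsGT_zero).congr fun r => by
    simp [div_eq_inv_mul]

variable (a : ι → E) (b : E)

/-- The second-order operator `∂_b + ∑ i, ∂_{a i}²` with drift `b`; the heat operator and its
adjoint on space-time are of this form. -/
def parabolicOp (f : E → ℝ) (q : E) : ℝ :=
  fderiv ℝ f q b + ∑ i, fderiv ℝ (fderiv ℝ f) q (a i) (a i)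

/-- The finite-difference approximation of `parabolicOp a b`, with step `r` in the directions `a i`
and, according to parabolic scaling, step `r ^ 2` in the direction `b`. -/
def parabolicDiff (r : ℝ) (f : E → ℝ) (q : E) : ℝ :=
  (f (q + r ^ 2 • b) - f q + ∑ i, (f (q + r • a i) - f q + (f (q - r • a i) - f q))) / r ^ 2

variable {a b}

theorem parabolicDiff_eq_add (r : ℝ) (f : E → ℝ) (q : E) :
    parabolicDiff a b r f q = (f (q + r ^ 2 • b) - f q) / r ^ 2 +
      ∑ i, (f (q + r • a i) - f q + (f (q - r • a i) - f q)) / r ^ 2 := by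
  rw [parabolicDiff, add_div, Finset.sum_div]

theorem continuous_parabolicDiff {f : E → ℝ} (hf : Continuous f) (r : ℝ) :
    Continuous (parabolicDiff a b r f) := by
  unfold parabolicDiff; fun_prop

theorem continuous_parabolicOp {f : E → ℝ} (hf : ContDiff ℝ 2 f) :
    Continuous (parabolicOp a b f) :=
  ((hf.continuous_fderiv (by norm_num)).clm_apply continuous_const).add <|
    continuous_finsetSum _ fun i _ => continuous_fderiv_fderiv_apply hf (a i)

theorem tsupport_parabolicOp_subset (f : E → ℝ) : tsupport (parabolicOp a b f) ⊆ tsupport f := by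
  refine closure_minimal (fun q hq => ?_) (isClosed_tsupport f)
  contrapose! hq
  have hf : fderiv ℝ f q = 0 := image_eq_zero_of_notMem_tsupport fun h =>
    hq (tsupport_fderiv_subset ℝ h)
  have hf' : fderiv ℝ (fderiv ℝ f) q = 0 := image_eq_zero_of_notMem_tsupport fun h =>
    hq (tsupport_fderiv_subset ℝ (tsupport_fderiv_subset ℝ h))
  simp [parabolicOp, hf, hf']

theorem tendsto_parabolicDiff {f : E → ℝ} (hf : ContDiff ℝ 2 f) (q : E) :
    Tendsto (fun r => parabolicDiff a b r f q) (𝓝[>] 0) (𝓝 (parabolicOp a b f q)) := by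
  simp only [parabolicDiff_eq_add]
  exact (tendsto_drift_difference
    ((hf.differentiable (by norm_num) q).hasFDerivAt.hasLineDerivAt b)).add
    (tendsto_finsetSum _ fun i _ => tendsto_second_difference hf q (a i))

theorem parabolicDiff_le_of_increment_le {f g : E → ℝ} {p q : E} {r : ℝ} (hr : r ∈ Ioc 0 1)
    (h : ∀ z, ‖z‖ ≤ r * stepRadius a b → f (p + z) - f p ≤ g (q + z) - g q) :
    parabolicDiff a b r f p ≤ parabolicDiff a b r g q := by
  have hdrift : ‖r ^ 2 • b‖ ≤ r * stepRadius a b := by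
    rw [norm_smul, norm_pow, Real.norm_of_nonneg hr.1.le, sq, mul_assoc]
    refine mul_le_mul_of_nonneg_left ?_ hr.1.le
    exact (mul_le_of_le_one_left (norm_nonneg b) hr.2).trans
      (le_add_of_nonneg_right (by positivity))
  have hstep (i : ι) : ‖r • a i‖ ≤ r * stepRadius a b := by
    rw [norm_smul, Real.norm_of_nonneg hr.1.le]
    refine mul_le_mul_of_nonneg_left ?_ hr.1.le
    exact (Finset.single_le_sum (fun j _ => norm_nonneg (a j)) (Finset.mem_univ i)).trans
      (le_add_of_nonneg_left (norm_nonneg b))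
  unfold parabolicDiff
  refine div_le_div_of_nonneg_right (add_le_add (h _ hdrift) (Finset.sum_le_sum fun i _ =>
    add_le_add (h _ (hstep i)) ?_)) (sq_nonneg r)
  simpa only [sub_eq_add_neg] using h (-(r • a i)) (by rw [norm_neg]; exact hstep i)

theorem parabolicDiff_eq_zero_of_notMem_cthickening {f : E → ℝ} {q : E} {r : ℝ} (hr : r ∈ Ioc 0 1)
    (hq : q ∉ Metric.cthickening (stepRadius a b) (tsupport f)) :
    parabolicDiff a b r f q = 0 := by
  have hf (z : E) (hz : ‖z‖ ≤ stepRadius a b) : f (q + z) = 0 := by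
    refine image_eq_zero_of_notMem_tsupport fun hmem =>
      hq (Metric.mem_cthickening_of_dist_le _ _ _ _ hmem ?_)
    rwa [dist_self_add_right]
  have hincr (z : E) (hz : ‖z‖ ≤ r * stepRadius a b) : f (q + z) - f q = 0 := by
    rw [hf z (hz.trans (mul_le_of_le_one_left stepRadius_nonneg hr.2)), ← add_zero q,
      add_zero, ← add_zero q, hf 0 (by simpa using stepRadius_nonneg), sub_zero]
  have hzero : parabolicDiff a b r (fun _ => (0 : ℝ)) q = 0 := by simp [parabolicDiff]
  refine le_antisymm ?_ ?_ <;> rw [← hzero] <;>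
    exact parabolicDiff_le_of_increment_le hr fun z hz => by simp [hincr z hz]

theorem exists_drift_difference_bound {f : E → ℝ} (hf : ContDiff ℝ 1 f) (b : E) {K : Set E}
    (hK : IsCompact K) :
    ∃ M, ∀ r ∈ Ioc (0 : ℝ) 1, ∀ q ∈ K, |(f (q + r ^ 2 • b) - f q) / r ^ 2| ≤ M := by
  obtain ⟨M, hM⟩ := (hK.prod (isCompact_Icc (a := (0 : ℝ)) (b := 1))).exists_bound_of_continuousOn
    (f := fun y => fderiv ℝ f (y.1 + y.2 • b) b)
    (((hf.continuous_fderiv (by norm_num)).comp (by fun_prop)).clm_apply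
      continuous_const).continuousOn
  refine ⟨M, fun r hr q hq => ?_⟩
  have hr2 : 0 < r ^ 2 := pow_pos hr.1 2
  have hD (z : ℝ) : HasDerivAt (fun s : ℝ => f (q + s • b)) (fderiv ℝ f (q + z • b) b) z :=
    (hf.differentiable (by norm_num) _).hasFDerivAt.comp_hasDerivAt z
      (by simpa using ((hasDerivAt_id z).smul_const b).const_add q)
  obtain ⟨ξ, hξ, h⟩ := exists_hasDerivAt_eq_slope _ _ hr2
    (fun z _ => (hD z).continuousAt.continuousWithinAt) (fun z _ => hD z)
  simp only [zero_smul, add_zero, sub_zero] at h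
  rw [← h]
  exact hM (q, ξ) ⟨hq, hξ.1.le, hξ.2.le.trans (pow_le_one₀ hr.1.le hr.2)⟩

theorem exists_second_difference_bound {f : E → ℝ} (hf : ContDiff ℝ 2 f) (a : E) {K : Set E}
    (hK : IsCompact K) :
    ∃ M, ∀ r ∈ Ioc (0 : ℝ) 1, ∀ q ∈ K,
      |(f (q + r • a) - f q + (f (q - r • a) - f q)) / r ^ 2| ≤ M := by
  have hD := continuous_fderiv_fderiv_apply hf a
  obtain ⟨M, hM⟩ := (hK.prod (isCompact_Icc (a := (0 : ℝ)) (b := 1))).exists_bound_of_continuousOn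
    (f := fun y => (fderiv ℝ (fderiv ℝ f) (y.1 + y.2 • a) a a +
      fderiv ℝ (fderiv ℝ f) (y.1 - y.2 • a) a a) / 2)
    (((hD.comp (by fun_prop)).add (hD.comp (by fun_prop))).div_const 2).continuousOn
  refine ⟨M, fun r hr q hq => ?_⟩
  obtain ⟨ξ, hξ, h⟩ := exists_second_difference_eq_fderiv hf q a hr.1
  rw [h, mul_div_cancel_left₀ _ (pow_pos hr.1 2).ne']
  exact hM (q, ξ) ⟨hq, hξ.1.le, hξ.2.le.trans hr.2⟩

theorem exists_parabolicDiff_bound {f : E → ℝ} (hf : ContDiff ℝ 2 f) {K : Set E}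
    (hK : IsCompact K) :
    ∃ M, ∀ r ∈ Ioc 0 1, ∀ q ∈ K, |parabolicDiff a b r f q| ≤ M := by
  obtain ⟨M, hM⟩ := exists_drift_difference_bound (hf.of_le one_le_two) b hK
  choose M' hM' using fun i => exists_second_difference_bound hf (a i) hK
  refine ⟨M + ∑ i, M' i, fun r hr q hq => ?_⟩
  rw [parabolicDiff_eq_add]
  exact (abs_add_le _ _).trans (add_le_add (hM r hr q hq)
    ((Finset.abs_sum_le_sum_abs _ _).trans (Finset.sum_le_sum fun i _ => hM' i r hr q hq)))

theorem exists_parabolicDiff_bound_of_hasCompactSupport [ProperSpace E] {f : E → ℝ}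
    (hf : ContDiff ℝ 2 f) (hfc : HasCompactSupport f) :
    ∃ M, ∀ r ∈ Ioc 0 1, ∀ q, |parabolicDiff a b r f q| ≤ M := by
  obtain ⟨M, hM⟩ := exists_parabolicDiff_bound (a := a) (b := b) hf
    (hfc.isCompact.cthickening (r := stepRadius a b))
  refine ⟨max M 0, fun r hr q => ?_⟩
  by_cases hq : q ∈ Metric.cthickening (stepRadius a b) (tsupport f)
  · exact (hM r hr q hq).trans (le_max_left _ _)
  · rw [parabolicDiff_eq_zero_of_notMem_cthickening hr hq, abs_zero]
    exact le_max_right _ _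

end ParabolicDifferences

section Adjoint

variable {E ι : Type*} [NormedAddCommGroup E] [MeasurableSpace E] [Fintype ι]
  {μ : Measure E} {U ψ : E → ℝ}

section Increments

variable [BorelSpace E]

theorem integrable_mul_increment [IsFiniteMeasureOnCompacts μ] (hU : Continuous U)
    (hψ : Continuous ψ) (hψc : HasCompactSupport ψ) (z : E) :
    Integrable (fun q => ψ q * (U (q + z) - U q)) μ :=
  (hψ.mul (by fun_prop)).integrable_of_hasCompactSupport hψc.mul_right

theorem integrable_increment_mul [IsFiniteMeasureOnCompacts μ] (hU : Continuous U)
    (hψ : Continuous ψ) (hψc : HasCompactSupport ψ) (z : E) :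
    Integrable (fun q => U q * (ψ (q + z) - ψ q)) μ := by
  have hincr : HasCompactSupport fun q => ψ (q + z) - ψ q :=
    (hψc.comp_homeomorph (Homeomorph.addRight z)).sub hψc
  exact (hU.mul (by fun_prop)).integrable_of_hasCompactSupport hincr.mul_left

theorem integral_mul_increment [IsFiniteMeasureOnCompacts μ] [μ.IsAddRightInvariant]
    (hU : Continuous U) (hψ : Continuous ψ) (hψc : HasCompactSupport ψ) (z : E) :
    ∫ q, ψ q * (U (q + z) - U q) ∂μ = ∫ q, U q * (ψ (q + -z) - ψ q) ∂μ := by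
  have hψU : Integrable (fun q => ψ q * U q) μ :=
    (hψ.mul hU).integrable_of_hasCompactSupport hψc.mul_right
  have hψUz : Integrable (fun q => ψ q * U (q + z)) μ :=
    (hψ.mul (by fun_prop)).integrable_of_hasCompactSupport hψc.mul_right
  have hUψz : Integrable (fun q => U q * ψ (q + -z)) μ := by
    simpa [mul_comm] using hψUz.comp_add_right (-z)
  have hshift : ∫ q, U q * ψ (q + -z) ∂μ = ∫ q, ψ q * U (q + z) ∂μ := by
    rw [← integral_add_right_eq_self (fun q => U q * ψ (q + -z)) z]
    simp [mul_comm]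
  simp only [mul_sub]
  rw [integral_sub hψUz hψU, integral_sub hUψz (by simpa only [mul_comm] using hψU), hshift]
  simp only [mul_comm]

end Increments

variable [NormedSpace ℝ E] {a : ι → E} {b : E}

theorem integral_mul_parabolicDiff (r : ℝ)
    (h : ∀ z, Integrable (fun q => ψ q * (U (q + z) - U q)) μ) :
    ∫ q, ψ q * parabolicDiff a b r U q ∂μ =
      (∫ q, ψ q * (U (q + r ^ 2 • b) - U q) ∂μ +
        ∑ i, (∫ q, ψ q * (U (q + r • a i) - U q) ∂μ +
          ∫ q, ψ q * (U (q + -(r • a i)) - U q) ∂μ)) / r ^ 2 := by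
  have hpair (i : ι) : Integrable (fun q => ψ q * (U (q + r • a i) - U q) +
      ψ q * (U (q + -(r • a i)) - U q)) μ := (h _).add (h _)
  simp only [parabolicDiff, mul_div_assoc', mul_add, Finset.mul_sum, sub_eq_add_neg (G := E)]
  rw [integral_div, integral_add (h _) (integrable_finsetSum _ fun i _ => hpair i),
    integral_finsetSum _ fun i _ => hpair i]
  simp only [integral_add (h _) (h _)]

theorem integral_mul_parabolicDiff_comm [BorelSpace E] [IsFiniteMeasureOnCompacts μ]
    [μ.IsAddRightInvariant] (hU : Continuous U) (hψ : Continuous ψ) (hψc : HasCompactSupport ψ)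
    (r : ℝ) :
    ∫ q, ψ q * parabolicDiff a b r U q ∂μ = ∫ q, parabolicDiff a (-b) r ψ q * U q ∂μ := by
  simp only [mul_comm _ (U _)]
  rw [integral_mul_parabolicDiff r (integrable_mul_increment hU hψ hψc),
    integral_mul_parabolicDiff r (integrable_increment_mul hU hψ hψc)]
  simp only [integral_mul_increment hU hψ hψc, neg_neg, smul_neg, add_comm]

end Adjoint

section SupConvolution

variable {E : Type*} [NormedAddCommGroup E]

/-- The sup-convolution of `v`, restricted to `K`, with the penalization `c`. It is applied to
compact sets `K` and continuous `v` and `c` only, so that the supremum is attained. -/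
def supConv (K : Set E) (c v : E → ℝ) (q : E) : ℝ := ⨆ k : K, (v k - c (q - k))

variable {K : Set E} {c v : E → ℝ} {q k : E}

theorem continuousOn_sub_penalization (hv : ContinuousOn v K) (hc : Continuous c) (q : E) :
    ContinuousOn (fun k => v k - c (q - k)) K :=
  hv.sub (hc.comp (by fun_prop)).continuousOn

theorem continuous_supConv (hK : IsCompact K) (hv : ContinuousOn v K) (hc : Continuous c) :
    Continuous (supConv K c v) := by
  have : CompactSpace K := isCompact_iff_compactSpace.1 hK
  have hv' : Continuous fun k : K => v k := continuousOn_iff_continuous_domRestrict.1 hv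
  have hF : Continuous fun y : E × K => v y.2 - c (y.1 - y.2) :=
    (hv'.comp continuous_snd).sub (hc.comp (by fun_prop))
  simpa only [image_univ] using! isCompact_univ.continuous_sSup (f := fun q (k : K) =>
    v k - c (q - k)) hF

theorem le_supConv (hK : IsCompact K) (hv : ContinuousOn v K) (hc : Continuous c) (hk : k ∈ K)
    (q : E) : v k - c (q - k) ≤ supConv K c v q := by
  have hbdd := hK.bddAbove_image (continuousOn_sub_penalization hv hc q)
  rw [image_eq_range] at hbdd
  exact le_ciSup hbdd ⟨k, hk⟩

theorem exists_supConv_eq (hK : IsCompact K) (hne : K.Nonempty) (hv : ContinuousOn v K)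
    (hc : Continuous c) (q : E) : ∃ k ∈ K, supConv K c v q = v k - c (q - k) := by
  obtain ⟨k, hk, hmax⟩ := hK.exists_sSup_image_eq hne (continuousOn_sub_penalization hv hc q)
  exact ⟨k, hk, by rw [← hmax, sSup_image']; rfl⟩

-- `supConv K c v` is touched from below at `q` by `v k - c (· - k)`, hence is semiconvex.
theorem neg_penalization_increment_le_supConv_increment (hK : IsCompact K)
    (hv : ContinuousOn v K) (hc : Continuous c) (hk : k ∈ K)
    (hqk : supConv K c v q = v k - c (q - k)) (z : E) :
    -c (q - k + z) - -c (q - k) ≤ supConv K c v (q + z) - supConv K c v q := by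
  have := le_supConv hK hv hc hk (q + z)
  rw [add_sub_right_comm] at this
  linarith

-- Moving the maximizer along with the point shows that `v` translated by `q - k` also touches
-- `supConv K c v` from below at `q`, so that subsolution inequalities for `v` pass from `k` to `q`.
theorem increment_le_supConv_increment (hK : IsCompact K) (hv : ContinuousOn v K)
    (hc : Continuous c) (hqk : supConv K c v q = v k - c (q - k)) {z : E} (hz : k + z ∈ K) :
    v (k + z) - v k ≤ supConv K c v (q + z) - supConv K c v q := by
  have := le_supConv hK hv hc hz (q + z)
  rw [add_sub_add_right_eq_sub] at this
  linarith

variable [NormedSpace ℝ E]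

theorem exists_contDiff_sq_norm_le [FiniteDimensional ℝ E] :
    ∃ c : E → ℝ, ContDiff ℝ 2 c ∧ c 0 = 0 ∧ ∀ z, ‖z‖ ^ 2 ≤ c z := by
  let e := toEuclidean (E := E)
  let e' : EuclideanSpace ℝ (Fin (Module.finrank ℝ E)) →L[ℝ] E := e.symm
  refine ⟨fun z => (‖e'‖ * ‖e z‖) ^ 2, ?_, by simp, fun z => ?_⟩
  · simp only [mul_pow]
    exact contDiff_const.mul ((contDiff_norm_sq ℝ).comp e.contDiff)
  · exact pow_le_pow_left₀ (norm_nonneg z) (by simpa [e'] using e'.le_opNorm (e z)) 2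

theorem exists_penalization_maximizer_near [FiniteDimensional ℝ E] (hK : IsCompact K)
    (hv : ContinuousOn v K) {ρ : ℝ} (hρ : 0 < ρ) :
    ∃ c : E → ℝ, ContDiff ℝ 2 c ∧ c 0 = 0 ∧ 0 ≤ c ∧
      ∀ q ∈ K, ∃ k ∈ K, dist k q < ρ ∧ supConv K c v q = v k - c (q - k) := by
  obtain ⟨c, hc, hc0, hcle⟩ := exists_contDiff_sq_norm_le (E := E)
  obtain ⟨B, hB⟩ := hK.exists_bound_of_continuousOn hv
  have hc_nonneg (z : E) : 0 ≤ c z := (sq_nonneg ‖z‖).trans (hcle z)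
  let Λ : ℝ := (2 * |B| + 1) / ρ ^ 2
  have hΛ : 0 < Λ := by positivity
  have hΛc : ContDiff ℝ 2 fun z => Λ * c z := contDiff_const.mul hc
  refine ⟨_, hΛc, by simp [hc0], fun z => mul_nonneg hΛ.le (hc_nonneg z), fun q hq => ?_⟩
  obtain ⟨k, hk, hqk⟩ := exists_supConv_eq hK ⟨q, hq⟩ hv hΛc.continuous q
  refine ⟨k, hk, ?_, hqk⟩
  have hpen : Λ * c (q - k) ≤ 2 * |B| := by
    have hself := le_supConv hK hv hΛc.continuous hq q
    rw [hqk, sub_self, hc0] at hself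
    have hvk := (abs_le.1 ((hB k hk).trans (le_abs_self B))).2
    have hvq := (abs_le.1 ((hB q hq).trans (le_abs_self B))).1
    linarith
  by_contra! hfar
  rw [dist_eq_norm'] at hfar
  have hfar_sq : Λ * ρ ^ 2 ≤ Λ * c (q - k) := by
    gcongr
    exact (pow_le_pow_left₀ hρ.le hfar 2).trans (hcle _)
  rw [div_mul_cancel₀ _ (pow_pos hρ 2).ne'] at hfar_sq
  linarith

variable {ι : Type*} [Fintype ι] (a : ι → E) (b : E)

/-- `H ≤ parabolicOp a b v` on `Ω`, for functions `v` which need not be differentiable: the lower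
limit of the difference quotients of `v` is at least `H`. -/
def IsParabolicSubsolutionOn (Ω : Set E) (H v : E → ℝ) : Prop :=
  ∀ q ∈ Ω, ∀ h < H q, ∀ᶠ r in 𝓝[>] 0, h ≤ parabolicDiff a b r v q

variable {a b}

theorem eventually_parabolicDiff_le_supConv (hK : IsCompact K) (hv : ContinuousOn v K)
    (hc : Continuous c) (hqk : supConv K c v q = v k - c (q - k)) {δ : ℝ} (hδ : 0 < δ)
    (hkK : Metric.closedBall k δ ⊆ K) :
    ∀ᶠ r in 𝓝[>] 0, parabolicDiff a b r v k ≤ parabolicDiff a b r (supConv K c v) q := by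
  have hsteps : ∀ᶠ r : ℝ in 𝓝[>] 0, r * stepRadius a b < δ :=
    ((continuous_mul_const (stepRadius a b)).tendsto 0).mono_left nhdsWithin_le_nhds
      |>.eventually_lt_const (by simpa using hδ)
  filter_upwards [hsteps, Ioc_mem_nhdsGT one_pos] with r hrδ hr
  refine parabolicDiff_le_of_increment_le hr fun z hz => ?_
  exact increment_le_supConv_increment hK hv hc hqk (hkK (by simpa using hz.trans hrδ.le))

theorem exists_le_parabolicDiff_supConv [ProperSpace E] (hK : IsCompact K)
    (hv : ContinuousOn v K) (hc : ContDiff ℝ 2 c) (ρ : ℝ) :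
    ∃ C, ∀ r ∈ Ioc 0 1, ∀ q, ∀ k ∈ K, dist k q < ρ → supConv K c v q = v k - c (q - k) →
      C ≤ parabolicDiff a b r (supConv K c v) q := by
  obtain ⟨M, hM⟩ := exists_parabolicDiff_bound (a := a) (b := b) hc.neg
    (isCompact_closedBall (0 : E) ρ)
  refine ⟨-M, fun r hr q k hk hkq hqk => ?_⟩
  have hmem : q - k ∈ Metric.closedBall 0 ρ := by simpa [dist_eq_norm, norm_sub_rev] using hkq.le
  exact (abs_le.1 (hM r hr _ hmem)).1.trans (parabolicDiff_le_of_increment_le hr fun z _ =>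
    neg_penalization_increment_le_supConv_increment hK hv hc.continuous hk hqk z)

theorem IsParabolicSubsolutionOn.exists_continuous_approx [FiniteDimensional ℝ E]
    {Ω K₀ : Set E} {H v : E → ℝ} (hvH : IsParabolicSubsolutionOn a b Ω H v) (hΩ : IsOpen Ω)
    (hK₀ : IsCompact K₀) (hK₀Ω : K₀ ⊆ Ω) (hv : ContinuousOn v Ω) (hH : ContinuousOn H Ω)
    {ω : ℝ} (hω : 0 < ω) :
    ∃ U : E → ℝ, Continuous U ∧ (∀ q ∈ K₀, |U q - v q| ≤ ω) ∧
      (∃ C, ∀ r ∈ Ioc 0 1, ∀ q ∈ K₀, C ≤ parabolicDiff a b r U q) ∧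
      IsParabolicSubsolutionOn a b K₀ (fun q => H q - ω) U := by
  have : ProperSpace E := FiniteDimensional.proper ℝ E
  obtain ⟨δ, hδ, hKΩ⟩ := hK₀.exists_cthickening_subset_open hΩ hK₀Ω
  have hK₀K := Metric.self_subset_cthickening (δ := δ) K₀
  have hK : IsCompact (Metric.cthickening δ K₀) := hK₀.cthickening
  have hvK := hv.mono hKΩ
  obtain ⟨δv, hδv, hv_unif⟩ := Metric.uniformContinuousOn_iff.1
    (hK.uniformContinuousOn_of_continuous hvK) ω hω
  obtain ⟨δH, hδH, hH_unif⟩ := Metric.uniformContinuousOn_iff.1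
    (hK.uniformContinuousOn_of_continuous (hH.mono hKΩ)) ω hω
  obtain ⟨c, hc, hc0, hc_nonneg, hmax⟩ := exists_penalization_maximizer_near hK hvK
    (ρ := min (δ / 2) (min δv δH)) (by positivity)
  simp only [lt_min_iff] at hmax
  refine ⟨_, continuous_supConv hK hvK hc.continuous, fun q hq => ?_, ?_, fun q hq h hh => ?_⟩
  · obtain ⟨k, hk, ⟨-, hkq, -⟩, hqk⟩ := hmax q (hK₀K hq)
    have hself := le_supConv hK hvK hc.continuous (hK₀K hq) q
    rw [sub_self, hc0, sub_zero] at hself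
    have hvkq := (abs_lt.1 (hv_unif k hk q (hK₀K hq) hkq)).2
    have hcqk : 0 ≤ c (q - k) := hc_nonneg (q - k)
    rw [abs_of_nonneg (sub_nonneg.2 hself), hqk]
    linarith
  · obtain ⟨C, hC⟩ := exists_le_parabolicDiff_supConv (a := a) (b := b) hK hvK hc (δ / 2)
    refine ⟨C, fun r hr q hq => ?_⟩
    obtain ⟨k, hk, ⟨hkq, -⟩, hqk⟩ := hmax q (hK₀K hq)
    exact hC r hr q k hk hkq hqk
  · obtain ⟨k, hk, ⟨hkδ, -, hkq⟩, hqk⟩ := hmax q (hK₀K hq)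
    have hball : Metric.closedBall k (δ / 2) ⊆ Metric.cthickening δ K₀ := fun y hy =>
      Metric.mem_cthickening_of_dist_le _ _ _ _ hq <|
        (dist_triangle y k q).trans (by linarith [Metric.mem_closedBall.1 hy])
    have hHk : h < H k := by
      have := (abs_lt.1 (hH_unif k hk q (hK₀K hq) hkq)).1
      linarith
    filter_upwards [hvH k (hKΩ hk) h hHk, eventually_parabolicDiff_le_supConv (a := a) (b := b)
      hK hvK hc.continuous hqk (half_pos hδ) hball] with r using le_trans

end SupConvolution

section WeakInequality

theorem tendsto_min_of_forall_lt {α : Type*} {l : Filter α} {f : α → ℝ} {g : ℝ}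
    (h : ∀ h < g, ∀ᶠ r in l, h ≤ f r) : Tendsto (fun r => min (f r) g) l (𝓝 g) := by
  refine tendsto_order.2 ⟨fun y hy => ?_, fun y hy => ?_⟩
  · obtain ⟨z, hyz, hzg⟩ := exists_between hy
    filter_upwards [h z hzg] with r hr using lt_min (hyz.trans_le hr) hy
  · exact Eventually.of_forall fun r => (min_le_right _ _).trans_lt hy

theorem continuous_mul_of_tsupport_subset {X : Type*} [TopologicalSpace X] {ψ F : X → ℝ}
    {Ω : Set X} (hψ : Continuous ψ) (hΩ : IsOpen Ω) (hψΩ : tsupport ψ ⊆ Ω)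
    (hF : ContinuousOn F Ω) : Continuous fun q => ψ q * F q :=
  continuous_of_tsupport fun _ hq => hψ.continuousAt.mul <|
    hF.continuousAt (hΩ.mem_nhds (hψΩ (tsupport_mul_subset_left hq)))

theorem integrable_mul_of_tsupport_subset {X : Type*} [TopologicalSpace X] [MeasurableSpace X]
    [OpensMeasurableSpace X] {μ : Measure X} [IsFiniteMeasureOnCompacts μ] {ψ F : X → ℝ}
    {Ω : Set X} (hψ : Continuous ψ) (hψc : HasCompactSupport ψ) (hΩ : IsOpen Ω)
    (hψΩ : tsupport ψ ⊆ Ω) (hF : ContinuousOn F Ω) : Integrable (fun q => ψ q * F q) μ :=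
  (continuous_mul_of_tsupport_subset hψ hΩ hψΩ hF).integrable_of_hasCompactSupport hψc.mul_right

theorem integral_mul_le_integral_mul_add_of_abs_sub_le {X : Type*} [TopologicalSpace X]
    [MeasurableSpace X] [OpensMeasurableSpace X] {μ : Measure X} [IsFiniteMeasureOnCompacts μ]
    {L U v : X → ℝ} {S Ω : Set X} {ω : ℝ}
    (hU : Continuous U) (hL : Continuous L) (hLc : HasCompactSupport L) (hΩ : IsOpen Ω)
    (hv : ContinuousOn v Ω) (hLS : tsupport L ⊆ S) (hSΩ : S ⊆ Ω)
    (hUv : ∀ q ∈ S, |U q - v q| ≤ ω) :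
    ∫ q, L q * U q ∂μ ≤ (∫ q, L q * v q ∂μ) + ω * ∫ q, |L q| ∂μ := by
  have hLv : Integrable (fun q => L q * v q) μ :=
    integrable_mul_of_tsupport_subset hL hLc hΩ (hLS.trans hSΩ) hv
  have hωL : Integrable (fun q => ω * |L q|) μ :=
    (hL.integrable_of_hasCompactSupport hLc).abs.const_mul ω
  rw [← integral_const_mul, ← integral_add hLv hωL]
  refine integral_mono ((hL.mul hU).integrable_of_hasCompactSupport hLc.mul_right)
    (hLv.add hωL) fun q => ?_
  by_cases hq : q ∈ tsupport L
  · have hLUv : L q * (U q - v q) ≤ |L q| * ω :=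
      (le_abs_self _).trans (by rw [abs_mul]; gcongr; exact hUv q (hLS hq))
    linarith
  · simp [image_eq_zero_of_notMem_tsupport hq]

variable {E ι : Type*} [NormedAddCommGroup E] [NormedSpace ℝ E] [MeasurableSpace E]
  [BorelSpace E] [Fintype ι] {μ : Measure E} [IsFiniteMeasureOnCompacts μ] {a : ι → E} {b : E}
  {U ψ : E → ℝ}

theorem tendsto_integral_parabolicDiff_mul [ProperSpace E] (hU : Continuous U)
    (hψ : ContDiff ℝ 2 ψ) (hψc : HasCompactSupport ψ) :
    Tendsto (fun r => ∫ q, parabolicDiff a b r ψ q * U q ∂μ) (𝓝[>] 0)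
      (𝓝 (∫ q, parabolicOp a b ψ q * U q ∂μ)) := by
  obtain ⟨M, hM⟩ := exists_parabolicDiff_bound_of_hasCompactSupport (a := a) (b := b) hψ hψc
  let K := Metric.cthickening (stepRadius a b) (tsupport ψ)
  have hK : IsCompact K := hψc.isCompact.cthickening
  have hbound : Integrable (K.indicator fun q => M * |U q|) μ :=
    ((by fun_prop : Continuous fun q => M * |U q|).continuousOn.integrableOn_compact
      hK).integrable_indicator hK.measurableSet
  refine tendsto_integral_filter_of_dominated_convergence _ ?_ ?_ hbound ?_
  · exact Eventually.of_forall fun r =>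
      ((continuous_parabolicDiff hψ.continuous r).mul hU).aestronglyMeasurable
  · filter_upwards [Ioc_mem_nhdsGT one_pos] with r hr
    refine Eventually.of_forall fun q => ?_
    by_cases hq : q ∈ K
    · rw [indicator_of_mem hq, norm_mul]
      exact mul_le_mul_of_nonneg_right (hM r hr q) (abs_nonneg _)
    · rw [indicator_of_notMem hq, parabolicDiff_eq_zero_of_notMem_cthickening hr hq, zero_mul,
        norm_zero]
  · exact Eventually.of_forall fun q => (tendsto_parabolicDiff hψ q).mul_const _

theorem tendsto_integral_mul_min_parabolicDiff {G : E → ℝ} {Ω : Set E} {C : ℝ}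
    (hU : Continuous U) (hψ : Continuous ψ) (hψc : HasCompactSupport ψ) (hΩ : IsOpen Ω)
    (hψΩ : tsupport ψ ⊆ Ω) (hG : ContinuousOn G Ω)
    (hC : ∀ r ∈ Ioc 0 1, ∀ q ∈ tsupport ψ, C ≤ parabolicDiff a b r U q)
    (hUG : IsParabolicSubsolutionOn a b (tsupport ψ) G U) :
    Tendsto (fun r => ∫ q, ψ q * min (parabolicDiff a b r U q) (G q) ∂μ) (𝓝[>] 0)
      (𝓝 (∫ q, ψ q * G q ∂μ)) := by
  have hbound : Integrable (fun q => |ψ q * (|C| + |G q|)|) μ :=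
    (integrable_mul_of_tsupport_subset hψ hψc hΩ hψΩ
      (continuousOn_const.add hG.abs)).abs
  refine tendsto_integral_filter_of_dominated_convergence _ ?_ ?_ hbound ?_
  · exact Eventually.of_forall fun r => (continuous_mul_of_tsupport_subset hψ hΩ hψΩ
      ((continuous_parabolicDiff hU r).continuousOn.inf hG)).aestronglyMeasurable
  · filter_upwards [Ioc_mem_nhdsGT one_pos] with r hr
    refine Eventually.of_forall fun q => ?_
    by_cases hq : q ∈ tsupport ψ
    · rw [norm_mul, abs_mul, abs_of_nonneg (a := |C| + |G q|) (by positivity)]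
      refine mul_le_mul_of_nonneg_left (abs_le.2 ⟨le_min ?_ ?_, (min_le_right _ _).trans ?_⟩)
        (abs_nonneg _)
      · linarith [hC r hr q hq, neg_abs_le C, abs_nonneg (G q)]
      · linarith [neg_abs_le (G q), abs_nonneg C]
      · linarith [le_abs_self (G q), abs_nonneg C]
    · simp [image_eq_zero_of_notMem_tsupport hq]
  · refine Eventually.of_forall fun q => ?_
    by_cases hq : q ∈ tsupport ψ
    · exact (tendsto_min_of_forall_lt (hUG q hq)).const_mul _
    · simp [image_eq_zero_of_notMem_tsupport hq]

theorem integral_mul_le_of_parabolicDiff_bounded_below [μ.IsAddRightInvariant] [ProperSpace E]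
    {G : E → ℝ} {Ω : Set E} {C : ℝ} (hU : Continuous U) (hψ : ContDiff ℝ 2 ψ)
    (hψc : HasCompactSupport ψ) (hψ0 : 0 ≤ ψ) (hΩ : IsOpen Ω) (hψΩ : tsupport ψ ⊆ Ω)
    (hG : ContinuousOn G Ω) (hC : ∀ r ∈ Ioc 0 1, ∀ q ∈ tsupport ψ, C ≤ parabolicDiff a b r U q)
    (hUG : IsParabolicSubsolutionOn a b (tsupport ψ) G U) :
    ∫ q, ψ q * G q ∂μ ≤ ∫ q, parabolicOp a (-b) ψ q * U q ∂μ := by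
  refine le_of_tendsto_of_tendsto'
    (tendsto_integral_mul_min_parabolicDiff hU hψ.continuous hψc hΩ hψΩ hG hC hUG)
    (tendsto_integral_parabolicDiff_mul hU hψ hψc) fun r => ?_
  have hdiff := continuous_parabolicDiff (a := a) (b := b) hU r
  rw [← integral_mul_parabolicDiff_comm hU hψ.continuous hψc]
  exact integral_mono
    (integrable_mul_of_tsupport_subset hψ.continuous hψc hΩ hψΩ (hdiff.continuousOn.inf hG))
    ((hψ.continuous.mul hdiff).integrable_of_hasCompactSupport hψc.mul_right)
    fun q => mul_le_mul_of_nonneg_left (min_le_left _ _) (hψ0 q)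

theorem IsParabolicSubsolutionOn.integral_mul_le_add [FiniteDimensional ℝ E]
    [μ.IsAddRightInvariant] {H v : E → ℝ} {Ω : Set E} {ω : ℝ}
    (hvH : IsParabolicSubsolutionOn a b Ω H v) (hΩ : IsOpen Ω) (hv : ContinuousOn v Ω)
    (hH : ContinuousOn H Ω) (hψ : ContDiff ℝ 2 ψ) (hψc : HasCompactSupport ψ) (hψ0 : 0 ≤ ψ)
    (hψΩ : tsupport ψ ⊆ Ω) (hω : 0 < ω) :
    ∫ q, ψ q * H q ∂μ ≤ (∫ q, parabolicOp a (-b) ψ q * v q ∂μ) +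
      ω * ((∫ q, ψ q ∂μ) + ∫ q, |parabolicOp a (-b) ψ q| ∂μ) := by
  have : ProperSpace E := FiniteDimensional.proper ℝ E
  have hLψ : tsupport (parabolicOp a (-b) ψ) ⊆ tsupport ψ := tsupport_parabolicOp_subset ψ
  obtain ⟨U, hU, hUv, ⟨C, hC⟩, hUH⟩ := hvH.exists_continuous_approx hΩ hψc.isCompact hψΩ hv hH hω
  have hweak := integral_mul_le_of_parabolicDiff_bounded_below (μ := μ) hU hψ hψc hψ0 hΩ hψΩ
    (hH.sub continuousOn_const) hC hUH
  have hreplace := integral_mul_le_integral_mul_add_of_abs_sub_le (μ := μ) hU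
    (continuous_parabolicOp hψ) (hψc.mono' (subset_closure.trans hLψ)) hΩ hv hLψ hψΩ hUv
  simp_rw [Pi.sub_apply, mul_sub] at hweak
  rw [integral_sub (integrable_mul_of_tsupport_subset hψ.continuous hψc hΩ hψΩ hH)
    ((hψ.continuous.integrable_of_hasCompactSupport hψc).mul_const ω), integral_mul_const] at hweak
  linarith

theorem IsParabolicSubsolutionOn.integral_mul_le [FiniteDimensional ℝ E] [μ.IsAddRightInvariant]
    {H v : E → ℝ} {Ω : Set E} (hvH : IsParabolicSubsolutionOn a b Ω H v) (hΩ : IsOpen Ω)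
    (hv : ContinuousOn v Ω) (hH : ContinuousOn H Ω) (hψ : ContDiff ℝ 2 ψ)
    (hψc : HasCompactSupport ψ) (hψ0 : 0 ≤ ψ) (hψΩ : tsupport ψ ⊆ Ω) :
    ∫ q, ψ q * H q ∂μ ≤ ∫ q, parabolicOp a (-b) ψ q * v q ∂μ := by
  let rhs (ω : ℝ) : ℝ := (∫ q, parabolicOp a (-b) ψ q * v q ∂μ) +
    ω * ((∫ q, ψ q ∂μ) + ∫ q, |parabolicOp a (-b) ψ q| ∂μ)
  have hrhs : Continuous rhs := by fun_prop
  have hlim : Tendsto rhs (𝓝[>] 0) (𝓝 (∫ q, parabolicOp a (-b) ψ q * v q ∂μ)) :=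
    tendsto_nhdsWithin_of_tendsto_nhds (hrhs.tendsto' _ _ (by simp [rhs]))
  refine ge_of_tendsto hlim ?_
  filter_upwards [self_mem_nhdsWithin] with ω hω using
    hvH.integral_mul_le_add hΩ hv hH hψ hψc hψ0 hψΩ hω

end WeakInequality

section TestFunctionEstimate

theorem tsupport_pow_subset {X : Type*} [TopologicalSpace X] (η : X → ℝ) {n : ℕ} (hn : n ≠ 0) :
    tsupport (fun q => η q ^ n) ⊆ tsupport η :=
  closure_mono (Function.support_pow η hn).subset

theorem continuousOn_abs_rpow {X : Type*} [TopologicalSpace X] {u : X → ℝ} {Ω : Set X} {p : ℝ}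
    (hu : ContinuousOn u Ω) (hp : 0 ≤ p) : ContinuousOn (fun q => |u q| ^ p) Ω :=
  hu.abs.rpow_const fun _ _ => Or.inr hp

variable {E ι : Type*} [NormedAddCommGroup E] [NormedSpace ℝ E] [Fintype ι] {a : ι → E} {b : E}
  {η : E → ℝ}

theorem parabolicOp_pow (hη : ContDiff ℝ 2 η) (k : ℕ) (q : E) :
    parabolicOp a b (fun y => η y ^ (k + 2)) q = η q ^ k * ((k + 2) *
      (η q * parabolicOp a b η q + (k + 1) * ∑ i, fderiv ℝ η q (a i) ^ 2)) := by
  have hη1 : Differentiable ℝ η := hη.differentiable (by norm_num)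
  have hη2 : Differentiable ℝ (fderiv ℝ η) :=
    (hη.fderiv_right (m := 1) (by norm_num)).differentiable (by norm_num)
  have hfderiv (n : ℕ) :
      fderiv ℝ (fun y => η y ^ (n + 1)) = fun y => ((n + 1) * η y ^ n) • fderiv ℝ η y := by
    ext1 y
    rw [fderiv_fun_pow _ (hη1 y)]
    simp
  have hsecond (z : E) : fderiv ℝ (fderiv ℝ fun y => η y ^ (k + 2)) q z z =
      η q ^ k * ((k + 2) * (η q * fderiv ℝ (fderiv ℝ η) q z z +
        (k + 1) * fderiv ℝ η q z ^ 2)) := by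
    rw [hfderiv (k + 1), fderiv_fun_smul (((hη1 q).fun_pow _).const_mul _) (hη2 q),
      fderiv_const_mul ((hη1 q).fun_pow _), hfderiv k]
    simp
    ring
  simp only [parabolicOp, hsecond]
  rw [hfderiv (k + 1)]
  simp only [← Finset.mul_sum, Finset.sum_add_distrib]
  simp
  ring

theorem exists_abs_parabolicOp_pow_le (hη : ContDiff ℝ 2 η) (hηc : HasCompactSupport η)
    (a : ι → E) (b : E) (k : ℕ) :
    ∃ A, 0 ≤ A ∧ ∀ q, |parabolicOp a b (fun y => η y ^ (k + 2)) q| ≤ A * |η q| ^ k := by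
  have hη' (z : E) : Continuous fun q => fderiv ℝ η q z :=
    (hη.continuous_fderiv (by norm_num)).clm_apply continuous_const
  have hfactor : Continuous fun q => (k + 2) *
      (η q * parabolicOp a b η q + (k + 1) * ∑ i, fderiv ℝ η q (a i) ^ 2) :=
    continuous_const.mul ((hη.continuous.mul (continuous_parabolicOp hη)).add
      (continuous_const.mul (continuous_finsetSum _ fun i _ => (hη' (a i)).pow 2)))
  obtain ⟨A, hA⟩ := hηc.isCompact.exists_bound_of_continuousOn hfactor.continuousOn
  refine ⟨|A|, abs_nonneg A, fun q => ?_⟩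
  by_cases hq : q ∈ tsupport η
  · rw [parabolicOp_pow hη, abs_mul, abs_pow, mul_comm]
    exact mul_le_mul_of_nonneg_right ((hA q hq).trans (le_abs_self A)) (by positivity)
  · have hη0 : η q = 0 := image_eq_zero_of_notMem_tsupport hq
    have hη'0 : fderiv ℝ η q = 0 :=
      image_eq_zero_of_notMem_tsupport fun h => hq (tsupport_fderiv_subset ℝ h)
    simp only [parabolicOp_pow hη, hη0, hη'0, zero_apply, zero_mul, zero_pow two_ne_zero,
      Finset.sum_const_zero, mul_zero, add_zero, abs_zero]
    positivity

theorem mul_pow_le_rpow_mul_pow_add {p X θ A : ℝ} {k : ℕ} (hp : 1 < p) (hX : 0 ≤ X)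
    (hθ : θ ∈ Icc 0 1) (hA : 0 ≤ A) (hk : ((k : ℝ) + 2) / p ≤ k) :
    A * θ ^ k * X ≤ X ^ p * θ ^ (k + 2) + A ^ (p / (p - 1)) := by
  obtain ⟨hθ0, hθ1⟩ := hθ
  have hconj : p.HolderConjugate (p / (p - 1)) := Real.HolderConjugate.conjExponent hp
  have hpow : θ ^ k ≤ θ ^ (((k : ℝ) + 2) / p) := by
    rw [← Real.rpow_natCast θ k]
    exact Real.rpow_le_rpow_of_exponent_ge' hθ0 hθ1 (by positivity) hk
  calc A * θ ^ k * X ≤ X * θ ^ (((k : ℝ) + 2) / p) * A := by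
        rw [mul_assoc, mul_comm A, mul_comm X]; gcongr
    _ ≤ (X * θ ^ (((k : ℝ) + 2) / p)) ^ p / p + A ^ (p / (p - 1)) / (p / (p - 1)) :=
        Real.young_inequality_of_nonneg (by positivity) hA hconj
    _ ≤ (X * θ ^ (((k : ℝ) + 2) / p)) ^ p + A ^ (p / (p - 1)) :=
        add_le_add (div_le_self (by positivity) hp.le)
          (div_le_self (by positivity) hconj.symm.lt.le)
    _ = X ^ p * θ ^ (k + 2) + A ^ (p / (p - 1)) := by
        rw [Real.mul_rpow hX (by positivity), ← Real.rpow_mul hθ0,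
          div_mul_cancel₀ _ hconj.ne_zero, ← Real.rpow_natCast θ (k + 2)]
        norm_cast

theorem exists_abs_parabolicOp_pow_mul_le {p : ℝ} {k : ℕ} (hη : ContDiff ℝ 2 η)
    (hηc : HasCompactSupport η) (hη01 : ∀ q, η q ∈ Icc 0 1) (hp : 1 < p)
    (hk : ((k : ℝ) + 2) / p ≤ k) (a : ι → E) (b : E) :
    ∃ A, 0 ≤ A ∧ ∀ κ > 0, ∀ q X, |parabolicOp a b (fun y => η y ^ (k + 2)) q * X| ≤
      κ * (η q ^ (k + 2) * |X| ^ p +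
        (tsupport η).indicator (fun _ => (A / κ) ^ (p / (p - 1))) q) := by
  obtain ⟨A, hA0, hA⟩ := exists_abs_parabolicOp_pow_le hη hηc a b k
  refine ⟨A, hA0, fun κ hκ q X => ?_⟩
  by_cases hq : q ∈ tsupport η
  · rw [indicator_of_mem hq, abs_mul]
    calc |parabolicOp a b (fun y => η y ^ (k + 2)) q| * |X|
        ≤ A * |η q| ^ k * |X| := by gcongr; exact hA q
      _ = κ * (A / κ * η q ^ k * |X|) := by rw [abs_of_nonneg (hη01 q).1]; field_simp
      _ ≤ κ * (|X| ^ p * η q ^ (k + 2) + (A / κ) ^ (p / (p - 1))) := by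
        gcongr
        exact mul_pow_le_rpow_mul_pow_add hp (abs_nonneg X) (hη01 q) (by positivity) hk
      _ = _ := by rw [mul_comm (|X| ^ p)]
  · have hL : parabolicOp a b (fun y => η y ^ (k + 2)) q = 0 :=
      image_eq_zero_of_notMem_tsupport fun h => hq
        (tsupport_pow_subset η (k + 1).succ_ne_zero (tsupport_parabolicOp_subset _ h))
    simp [hL, indicator_of_notMem hq, image_eq_zero_of_notMem_tsupport hq]

variable [MeasurableSpace E] [BorelSpace E] {μ : Measure E} [IsFiniteMeasureOnCompacts μ]
  {Ω : Set E} {p : ℝ} {k : ℕ}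

theorem exists_integral_parabolicOp_pow_mul_le (hη : ContDiff ℝ 2 η) (hηc : HasCompactSupport η)
    (hη01 : ∀ q, η q ∈ Icc 0 1) (hΩ : IsOpen Ω) (hηΩ : tsupport η ⊆ Ω) (hp : 1 < p)
    (hk : ((k : ℝ) + 2) / p ≤ k) (a : ι → E) (b : E) :
    ∃ C, ∀ κ > 0, ∀ v : E → ℝ, ContinuousOn v Ω →
      ∫ q, parabolicOp a b (fun y => η y ^ (k + 2)) q * v q ∂μ ≤
        κ * ((∫ q, η q ^ (k + 2) * |v q| ^ p ∂μ) + C / κ ^ (p / (p - 1))) := by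
  obtain ⟨A, hA0, hA⟩ := exists_abs_parabolicOp_pow_mul_le hη hηc hη01 hp hk a b
  refine ⟨μ.real (tsupport η) * A ^ (p / (p - 1)), fun κ hκ v hv => ?_⟩
  have hψ : ContDiff ℝ 2 fun q => η q ^ (k + 2) := hη.pow (k + 2)
  have hψη := tsupport_pow_subset η (n := k + 2) (by positivity)
  have hψc : HasCompactSupport fun q => η q ^ (k + 2) := hηc.mono' (subset_closure.trans hψη)
  have hLψ : tsupport (parabolicOp a b fun q => η q ^ (k + 2)) ⊆ tsupport fun q => η q ^ (k + 2) :=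
    tsupport_parabolicOp_subset _
  have hLψv : Integrable (fun q => parabolicOp a b (fun y => η y ^ (k + 2)) q * v q) μ :=
    integrable_mul_of_tsupport_subset (continuous_parabolicOp hψ)
      (hψc.mono' (subset_closure.trans hLψ)) hΩ ((hLψ.trans hψη).trans hηΩ) hv
  have hψvp : Integrable (fun q => η q ^ (k + 2) * |v q| ^ p) μ :=
    integrable_mul_of_tsupport_subset hψ.continuous hψc hΩ (hψη.trans hηΩ)
      (continuousOn_abs_rpow hv (by linarith))
  have hindicator : Integrable ((tsupport η).indicator fun _ => (A / κ) ^ (p / (p - 1))) μ :=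
    (continuousOn_const.integrableOn_compact hηc.isCompact).integrable_indicator
      (isClosed_tsupport η).measurableSet
  rw [mul_div_assoc, ← Real.div_rpow hA0 hκ.le, ← smul_eq_mul (μ.real _),
    ← integral_indicator_const _ (isClosed_tsupport η).measurableSet,
    ← integral_add hψvp hindicator, ← integral_const_mul]
  exact integral_mono hLψv ((hψvp.add hindicator).const_mul κ) fun q =>
    (le_abs_self _).trans (hA κ hκ q (v q))

theorem exists_integral_pow_mul_le [FiniteDimensional ℝ E] [μ.IsAddRightInvariant]
    (hη : ContDiff ℝ 2 η) (hηc : HasCompactSupport η) (hη01 : ∀ q, η q ∈ Icc 0 1)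
    (hΩ : IsOpen Ω) (hηΩ : tsupport η ⊆ Ω) (hp : 1 < p) (hk : ((k : ℝ) + 2) / p ≤ k)
    (a : ι → E) (b : E) :
    ∃ C, ∀ κ > 0, ∀ f u : E → ℝ, ContinuousOn f Ω → ContinuousOn u Ω →
      IsParabolicSubsolutionOn a b Ω (fun q => κ * (|u q| ^ p + f q)) (fun q => -u q) →
      ∫ q, η q ^ (k + 2) * f q ∂μ ≤ C / κ ^ (p / (p - 1)) := by
  obtain ⟨C, hC⟩ :=
    exists_integral_parabolicOp_pow_mul_le (μ := μ) hη hηc hη01 hΩ hηΩ hp hk a (-b)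
  refine ⟨C, fun κ hκ f u hf hu hsub => ?_⟩
  have hψ : ContDiff ℝ 2 fun q => η q ^ (k + 2) := hη.pow (k + 2)
  have hψη := tsupport_pow_subset η (n := k + 2) (by positivity)
  have hψc : HasCompactSupport fun q => η q ^ (k + 2) := hηc.mono' (subset_closure.trans hψη)
  have hup := continuousOn_abs_rpow hu (p := p) (by linarith)
  have hweak := hsub.integral_mul_le (μ := μ) hΩ hu.neg (continuousOn_const.mul (hup.add hf)) hψ
    hψc (fun q => pow_nonneg (hη01 q).1 _) (hψη.trans hηΩ)
  have hyoung := hC κ hκ _ hu.neg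
  simp_rw [mul_left_comm _ κ, integral_const_mul, mul_add] at hweak
  rw [integral_add
    (integrable_mul_of_tsupport_subset hψ.continuous hψc hΩ (hψη.trans hηΩ) hup)
    (integrable_mul_of_tsupport_subset hψ.continuous hψc hΩ (hψη.trans hηΩ) hf)] at hweak
  simp only [Pi.neg_apply, abs_neg] at hyoung
  exact le_of_add_le_add_left (le_of_mul_le_mul_left (hweak.trans hyoung) hκ)

end TestFunctionEstimate

section HeatSupersolutions

variable {N : ℕ}

/-- Classical supersolutions on `(0, ∞) × ℝ^N` of the inhomogeneous heat equation
`∂_t u = Δu + F`. -/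
structure IsHeatSupersolution (F u : ℝ → Eu N → ℝ) : Prop where
  continuousOn : ContinuousOn (fun q : ℝ × Eu N => u q.1 q.2) (Ioi 0 ×ˢ univ)
  contDiff : ∀ t > 0, ContDiff ℝ 2 (u t)
  differentiableAt : ∀ t > 0, ∀ x, DifferentiableAt ℝ (fun τ => u τ x) t
  lap_add_le_deriv : ∀ t > 0, ∀ x, lap (u t) x + F t x ≤ deriv (fun τ => u τ x) t

theorem lap_eq_sum_fderiv_fderiv (f : Eu N → ℝ) (x : Eu N) :
    lap f x = ∑ i, fderiv ℝ (fderiv ℝ f) x (EuclideanSpace.single i 1)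
      (EuclideanSpace.single i 1) := by
  simp only [lap, iteratedFDeriv_two_apply]

theorem lap_comp_smul {f : Eu N → ℝ} (hf : ContDiff ℝ 2 f) (c : ℝ) (x : Eu N) :
    lap (fun y => f (c • y)) x = c ^ 2 * lap f (c • x) := by
  simp only [lap, iteratedFDeriv_comp_const_smul c hf, smul_eq_mul,
    smul_apply, Finset.mul_sum]

/-- The coordinate directions of `ℝ^N` in space-time. -/
def spaceDirection (i : Fin N) : ℝ × Eu N := (0, EuclideanSpace.single i 1)

theorem tendsto_parabolicDiff_neg_heat {u : ℝ → Eu N → ℝ} {t : ℝ} {x : Eu N}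
    (hx : ContDiff ℝ 2 (u t)) (ht : DifferentiableAt ℝ (fun τ => u τ x) t) :
    Tendsto (fun r => parabolicDiff spaceDirection (-1, 0) r (fun q => -u q.1 q.2) (t, x))
      (𝓝[>] 0) (𝓝 (deriv (fun τ => u τ x) t - lap (u t) x)) := by
  have hdrift : HasLineDerivAt ℝ (fun q : ℝ × Eu N => -u q.1 q.2) (deriv (fun τ => u τ x) t)
      (t, x) (-1, 0) := by
    have hline : HasDerivAt (fun s : ℝ => t - s) (-1) 0 := by
      simpa using (hasDerivAt_id (0 : ℝ)).const_sub t
    have hut : HasDerivAt (fun τ => u τ x) (deriv (fun τ => u τ x) t) (t - 0) := by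
      simpa only [sub_zero] using ht.hasDerivAt
    simpa [HasLineDerivAt, sub_eq_add_neg] using! (hut.comp 0 hline).neg
  have hlap : ∑ i, fderiv ℝ (fderiv ℝ fun y => -u t y) x (EuclideanSpace.single i 1)
      (EuclideanSpace.single i 1) = -lap (u t) x := by
    have hfderiv : fderiv ℝ (fun y => -u t y) = fun y => -fderiv ℝ (u t) y :=
      funext fun _ => fderiv_fun_neg
    simp only [lap_eq_sum_fderiv_fderiv, hfderiv, fderiv_fun_neg, neg_apply,
      Finset.sum_neg_distrib]
  have hlim := (tendsto_drift_difference hdrift).add (tendsto_finsetSum Finset.univ fun i _ =>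
    tendsto_second_difference hx.neg x (EuclideanSpace.single i 1))
  rw [hlap, ← sub_eq_add_neg] at hlim
  refine hlim.congr fun r => ?_
  rw [parabolicDiff_eq_add]
  simp [spaceDirection]

theorem IsHeatSupersolution.isParabolicSubsolutionOn_neg {F u : ℝ → Eu N → ℝ}
    (hu : IsHeatSupersolution F u) :
    IsParabolicSubsolutionOn spaceDirection (-1, 0) (Ioi 0 ×ˢ univ) (fun q => F q.1 q.2)
      (fun q => -u q.1 q.2) := by
  rintro ⟨t, x⟩ ⟨ht : 0 < t, -⟩ h hh
  have hlt := hh.trans_le (le_sub_iff_add_le'.2 (hu.lap_add_le_deriv t ht x))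
  filter_upwards [(tendsto_parabolicDiff_neg_heat (hu.contDiff t ht)
    (hu.differentiableAt t ht x)).eventually_const_lt hlt] with r using le_of_lt

theorem IsHeatSupersolution.rescale {F u : ℝ → Eu N → ℝ} (hu : IsHeatSupersolution F u) {T : ℝ}
    (hT : 0 < T) :
    IsHeatSupersolution (fun s y => T * F (T * s) (√T • y)) (fun s y => u (T * s) (√T • y)) where
  continuousOn := hu.continuousOn.comp (f := fun q : ℝ × Eu N => (T * q.1, √T • q.2))
    (by fun_prop) fun q hq => ⟨mul_pos hT hq.1, mem_univ _⟩
  contDiff s hs := (hu.contDiff _ (mul_pos hT hs)).comp (contDiff_const_smul _)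
  differentiableAt s hs y := (hu.differentiableAt _ (mul_pos hT hs) _).comp s (by fun_prop)
  lap_add_le_deriv s hs y := by
    rw [lap_comp_smul (hu.contDiff _ (mul_pos hT hs)), Real.sq_sqrt hT.le,
      deriv_comp_mul_left T (fun τ => u τ (√T • y)), smul_eq_mul, ← mul_add]
    exact mul_le_mul_of_nonneg_left (hu.lap_add_le_deriv _ (mul_pos hT hs) _) hT.le

theorem exists_integral_pow_mul_rescaled_le {η : ℝ × Eu N → ℝ} {p : ℝ} {k : ℕ}
    (hη : ContDiff ℝ 2 η) (hηc : HasCompactSupport η) (hη01 : ∀ q, η q ∈ Icc 0 1)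
    (hη0 : tsupport η ⊆ Ioi 0 ×ˢ univ) (hp : 1 < p) (hk : ((k : ℝ) + 2) / p ≤ k) :
    ∃ C, ∀ f u : ℝ → Eu N → ℝ,
      ContinuousOn (fun q : ℝ × Eu N => f q.1 q.2) (Ioi 0 ×ˢ univ) →
      IsHeatSupersolution (fun t x => |u t x| ^ p + f t x) u → ∀ T > 0,
      ∫ q, η q ^ (k + 2) * f (T * q.1) (√T • q.2) ≤ C / T ^ (p / (p - 1)) := by
  have : (volume : Measure (ℝ × Eu N)).IsAddHaarMeasure := Measure.prod.instIsAddHaarMeasure _ _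
  obtain ⟨C, hC⟩ := exists_integral_pow_mul_le (μ := volume) hη hηc hη01
    (isOpen_Ioi.prod isOpen_univ) hη0 hp hk spaceDirection (-1, 0)
  refine ⟨C, fun f u hf hu T hT => ?_⟩
  have hresc := hu.rescale hT
  refine hC T hT (fun q => f (T * q.1) (√T • q.2)) (fun q => u (T * q.1) (√T • q.2)) ?_
    hresc.continuousOn hresc.isParabolicSubsolutionOn_neg
  exact hf.comp (f := fun q : ℝ × Eu N => (T * q.1, √T • q.2))
    (by fun_prop) fun q hq => ⟨mul_pos hT hq.1, mem_univ _⟩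

end HeatSupersolutions

section SeparatedTestFunctions

theorem tsupport_mul_prod_subset {X Y : Type*} [TopologicalSpace X] [TopologicalSpace Y]
    (φ : X → ℝ) (χ : Y → ℝ) :
    (tsupport fun q : X × Y => φ q.1 * χ q.2) ⊆ tsupport φ ×ˢ tsupport χ :=
  closure_minimal (fun _ hq => ⟨subset_tsupport φ (left_ne_zero_of_mul hq),
    subset_tsupport χ (right_ne_zero_of_mul hq)⟩) ((isClosed_tsupport φ).prod (isClosed_tsupport χ))

theorem tendsto_integral_comp_smul_mul {E : Type*} [NormedAddCommGroup E] [NormedSpace ℝ E]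
    [MeasurableSpace E] [BorelSpace E] {μ : Measure E} {g w : E → ℝ} {M : ℝ} (hg : Continuous g)
    (hgM : ∀ x, |g x| ≤ M) (hw : Integrable w μ) :
    Tendsto (fun r : ℝ => ∫ x, g (r • x) * w x ∂μ) (𝓝 0) (𝓝 (g 0 * ∫ x, w x ∂μ)) := by
  rw [← integral_const_mul]
  refine tendsto_integral_filter_of_dominated_convergence (fun x => M * |w x|)
    (Eventually.of_forall fun r => ?_) (Eventually.of_forall fun r => ?_) (hw.abs.const_mul M)
    (Eventually.of_forall fun x => ?_)
  · exact (hg.comp (by fun_prop)).aestronglyMeasurable.mul hw.aestronglyMeasurable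
  · refine Eventually.of_forall fun x => ?_
    rw [norm_mul]
    exact mul_le_mul_of_nonneg_right (hgM _) (abs_nonneg _)
  · exact ((by fun_prop : Continuous fun r : ℝ => g (r • x)).tendsto' 0 _ (by simp)).mul_const _

theorem integral_mul_rpow_pos {φ : ℝ → ℝ} (hφ : Continuous φ) (hφc : HasCompactSupport φ)
    (hφ0 : 0 ≤ φ) (hφΩ : tsupport φ ⊆ Ioi 0) {s : ℝ} (hs : φ s ≠ 0) (σ : ℝ) :
    0 < ∫ s, φ s * s ^ σ := by
  have hpos {s : ℝ} (hs : φ s ≠ 0) : 0 < s := hφΩ (subset_tsupport φ hs)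
  have hcont : Continuous fun s => φ s * s ^ σ :=
    continuous_mul_of_tsupport_subset hφ isOpen_Ioi hφΩ fun s (hs : 0 < s) =>
      (Real.continuousAt_rpow_const s σ (Or.inl hs.ne')).continuousWithinAt
  refine hcont.integral_pos_of_hasCompactSupport_nonneg_nonzero hφc.mul_right (fun s => ?_)
    (mul_ne_zero hs (Real.rpow_pos_of_pos (hpos hs) σ).ne')
  by_cases h : φ s = 0
  · simp [h]
  · exact mul_nonneg (hφ0 s) (Real.rpow_nonneg (hpos h).le σ)

variable {N : ℕ}

theorem integral_mul_comp_sqrt_smul {T : ℝ} (hT : 0 < T) (χ w : Eu N → ℝ) :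
    ∫ y, χ y * w (√T • y) = T ^ (-((N : ℝ) / 2)) * ∫ x, χ ((√T)⁻¹ • x) * w x := by
  have hsT : 0 < √T := Real.sqrt_pos.2 hT
  have hchange := Measure.integral_comp_smul volume (fun x => χ ((√T)⁻¹ • x) * w x) √T
  simp only [inv_smul_smul₀ hsT.ne'] at hchange
  rw [hchange, finrank_euclideanSpace_fin, abs_of_pos (by positivity), smul_eq_mul,
    Real.sqrt_eq_rpow, ← Real.rpow_natCast, ← Real.rpow_mul hT.le, ← Real.rpow_neg hT.le]
  ring_nf

theorem integral_mul_rpow_mul_rescaled {φ : ℝ → ℝ} (hφΩ : tsupport φ ⊆ Ioi 0) {T : ℝ}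
    (hT : 0 < T) (σ : ℝ) (χ w : Eu N → ℝ) :
    ∫ q : ℝ × Eu N, φ q.1 * χ q.2 * ((T * q.1) ^ σ * w (√T • q.2)) =
      T ^ (σ - (N : ℝ) / 2) * ((∫ s, φ s * s ^ σ) * ∫ x, χ ((√T)⁻¹ • x) * w x) := by
  have hsep (q : ℝ × Eu N) : φ q.1 * χ q.2 * ((T * q.1) ^ σ * w (√T • q.2)) =
      T ^ σ * ((φ q.1 * q.1 ^ σ) * (χ q.2 * w (√T • q.2))) := by
    by_cases h : φ q.1 = 0
    · simp [h]
    · rw [Real.mul_rpow hT.le (hφΩ (subset_tsupport φ h)).le]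
      ring
  simp only [hsep]
  rw [integral_const_mul, Measure.volume_eq_prod,
    integral_prod_mul (fun s => φ s * s ^ σ) fun y => χ y * w (√T • y),
    integral_mul_comp_sqrt_smul hT, sub_eq_add_neg, Real.rpow_add hT]
  ring

theorem continuousOn_rpow_mul {w : Eu N → ℝ} (hw : Continuous w) (σ : ℝ) :
    ContinuousOn (fun q : ℝ × Eu N => q.1 ^ σ * w q.2) (Ioi 0 ×ˢ univ) :=
  (continuousOn_fst.rpow_const fun _ hq => Or.inl (ne_of_gt hq.1)).mul
    (hw.comp continuous_snd).continuousOn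

/-- A smooth cutoff supported at positive times. -/
def timeCutoff : ContDiffBump (3 / 2 : ℝ) := ⟨1 / 4, 1 / 2, by norm_num, by norm_num⟩

theorem tsupport_timeCutoff_subset : tsupport timeCutoff ⊆ Ioi 0 := by
  rw [timeCutoff.tsupport_eq, Real.closedBall_eq_Icc]
  exact fun s hs => lt_of_lt_of_le (by norm_num [timeCutoff]) hs.1

theorem integral_timeCutoff_pow_mul_rpow_pos {m : ℕ} (hm : m ≠ 0) (σ : ℝ) :
    0 < ∫ s, timeCutoff s ^ m * s ^ σ := by
  have hsupp := tsupport_pow_subset timeCutoff hm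
  have hcenter : timeCutoff (3 / 2) = 1 := timeCutoff.eventuallyEq_one.eq_of_nhds
  exact integral_mul_rpow_pos (timeCutoff.continuous.pow m)
    (timeCutoff.hasCompactSupport.mono' (subset_closure.trans hsupp))
    (fun s => pow_nonneg timeCutoff.nonneg m) (hsupp.trans tsupport_timeCutoff_subset)
    (s := 3 / 2) (by simp [hcenter]) σ

theorem exists_integral_timeCutoff_pow_mul_le {p : ℝ} {k : ℕ} (hp : 1 < p)
    (hk : ((k : ℝ) + 2) / p ≤ k) (χ : ContDiffBump (0 : Eu N)) :
    ∃ C, ∀ f u : ℝ → Eu N → ℝ,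
      ContinuousOn (fun q : ℝ × Eu N => f q.1 q.2) (Ioi 0 ×ˢ univ) →
      IsHeatSupersolution (fun t x => |u t x| ^ p + f t x) u → ∀ T > 0,
      ∫ q : ℝ × Eu N, timeCutoff q.1 ^ (k + 2) * χ q.2 ^ (k + 2) * f (T * q.1) (√T • q.2) ≤
        C / T ^ (p / (p - 1)) := by
  have hsupp := tsupport_mul_prod_subset timeCutoff χ
  simpa only [mul_pow] using exists_integral_pow_mul_rescaled_le
    (η := fun q => timeCutoff q.1 * χ q.2)
    ((timeCutoff.contDiff.comp contDiff_fst).mul (χ.contDiff.comp contDiff_snd))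
    ((timeCutoff.hasCompactSupport.isCompact.prod χ.hasCompactSupport.isCompact).of_isClosed_subset
      (isClosed_tsupport _) hsupp)
    (fun q => ⟨mul_nonneg timeCutoff.nonneg χ.nonneg,
      mul_le_one₀ timeCutoff.le_one χ.nonneg χ.le_one⟩)
    (hsupp.trans (prod_mono tsupport_timeCutoff_subset (subset_univ _))) hp hk

theorem exists_integral_cutoff_mul_le {p : ℝ} (hp : 1 < p) (σ : ℝ) (N : ℕ) :
    ∃ g : Eu N → ℝ, Continuous g ∧ g 0 = 1 ∧ (∀ x, |g x| ≤ 1) ∧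
      ∃ C, ∀ (w : Eu N → ℝ) (u : ℝ → Eu N → ℝ), Continuous w →
        IsHeatSupersolution (fun t x => |u t x| ^ p + t ^ σ * w x) u → ∀ T > 0,
        ∫ x, g ((√T)⁻¹ • x) * w x ≤ C * T ^ ((N : ℝ) / 2 - σ - p / (p - 1)) := by
  obtain ⟨k, hk⟩ := exists_nat_ge (2 / (p - 1))
  replace hk : ((k : ℝ) + 2) / p ≤ k := by
    rw [div_le_iff₀ (by linarith)] at hk ⊢
    linarith
  let χ : ContDiffBump (0 : Eu N) := ⟨1, 2, one_pos, one_lt_two⟩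
  have hχ1 (x : Eu N) : |χ x ^ (k + 2)| ≤ 1 := by
    rw [abs_of_nonneg (pow_nonneg χ.nonneg _)]
    exact pow_le_one₀ χ.nonneg χ.le_one
  have hχ0 : χ 0 ^ (k + 2) = 1 := by
    rw [χ.eventuallyEq_one.eq_of_nhds, Pi.one_apply, one_pow]
  obtain ⟨C, hC⟩ := exists_integral_timeCutoff_pow_mul_le hp hk χ
  have htime : 0 < ∫ s, timeCutoff s ^ (k + 2) * s ^ σ :=
    integral_timeCutoff_pow_mul_rpow_pos (by positivity) σ
  refine ⟨fun x => χ x ^ (k + 2), χ.continuous.pow _, hχ0, hχ1,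
    C / ∫ s, timeCutoff s ^ (k + 2) * s ^ σ, fun w u hw hu T hT => ?_⟩
  have htest := hC (fun t x => t ^ σ * w x) u (continuousOn_rpow_mul hw σ) hu T hT
  rw [integral_mul_rpow_mul_rescaled (φ := fun s => timeCutoff s ^ (k + 2))
    ((tsupport_pow_subset timeCutoff (by positivity)).trans tsupport_timeCutoff_subset)
    hT σ (fun x => χ x ^ (k + 2)) w] at htest
  have hpow : T ^ ((N : ℝ) / 2 - σ - p / (p - 1)) =
      (T ^ (σ - (N : ℝ) / 2) * T ^ (p / (p - 1)))⁻¹ := by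
    rw [← Real.rpow_add hT, ← Real.rpow_neg hT.le]
    ring_nf
  have hTσ := Real.rpow_pos_of_pos hT (σ - (N : ℝ) / 2)
  rw [hpow, ← div_eq_mul_inv, div_div, le_div_iff₀ (by positivity)]
  rw [le_div_iff₀ (by positivity)] at htest
  linarith

end SeparatedTestFunctions

theorem test_function_inequality_global_solution_general {N : ℕ} {p σ : ℝ} (hp : 1 < p)
    {w : Eu N → ℝ} (hw : Continuous w) (hwI : Integrable w) {u : ℝ → Eu N → ℝ}
    (hu : IsHeatSupersolution (fun t x => |u t x| ^ p + t ^ σ * w x) u) :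
    ∃ C > (0 : ℝ), ∃ T₀ > (0 : ℝ), ∀ T : ℝ, T₀ ≤ T →
      (∫ x, w x) ≤ C * T ^ ((N : ℝ) / 2 - σ - p / (p - 1)) := by
  rcases le_or_gt (∫ x, w x) 0 with hw0 | hwpos
  · exact ⟨1, one_pos, 1, one_pos, fun T hT =>
      hw0.trans (mul_nonneg zero_le_one (Real.rpow_nonneg (zero_le_one.trans hT) _))⟩
  obtain ⟨g, hg, hg0, hg1, C, hC⟩ := exists_integral_cutoff_mul_le hp σ N
  have hlim : Tendsto (fun T => ∫ x, g ((√T)⁻¹ • x) * w x) atTop (𝓝 (∫ x, w x)) := by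
    have := tendsto_integral_comp_smul_mul hg hg1 hwI
    rw [hg0, one_mul] at this
    exact this.comp (tendsto_inv_atTop_zero.comp Real.tendsto_sqrt_atTop)
  obtain ⟨T₀, hT₀⟩ := eventually_atTop.1
    ((hlim.eventually_const_lt (half_lt_self hwpos)).and (eventually_gt_atTop 0))
  have hbound (T : ℝ) (hT : T₀ ≤ T) :
      (∫ x, w x) < 2 * C * T ^ ((N : ℝ) / 2 - σ - p / (p - 1)) := by
    linarith [(hT₀ T hT).1, hC w u hw hu T (hT₀ T hT).2]
  have hT₀pos := (hT₀ T₀ le_rfl).2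
  exact ⟨2 * C, pos_of_mul_pos_left (hwpos.trans (hbound T₀ le_rfl)) (by positivity), T₀, hT₀pos,
    fun T hT => (hbound T hT).le⟩

/-- The key test-function inequality for global classical solutions, −1 < σ:
∫ w ≤ C T^{N/2 − σ − p/(p−1)} for all large T. -/
theorem test_function_inequality_global_solution
    (N : ℕ) (hN : 2 ≤ N) (p σ : ℝ) (hp1 : 1 < p) (hσ : -1 < σ)
    (u₀ : Eu N → ℝ) (hu₀ : IsC0 u₀)
    (w : Eu N → ℝ) (hwC : IsC0 w) (hwI : Integrable w) (hwpos : 0 < ∫ x, w x)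
    (u : ℝ → Eu N → ℝ)
    (hcont : ContinuousOn (fun q : ℝ × Eu N => u q.1 q.2) (Set.Ici 0 ×ˢ Set.univ))
    (hx : ∀ t : ℝ, 0 < t → ContDiff ℝ 2 (u t))
    (hderiv : ∀ x : Eu N, ContinuousOn (fun t : ℝ => deriv (fun τ : ℝ => u τ x) t) (Set.Ioi 0))
    (hpde : ∀ t : ℝ, 0 < t → ∀ x : Eu N,
      HasDerivAt (fun τ : ℝ => u τ x) (lap (u t) x + |u t x| ^ p + t ^ σ * w x) t)
    (hinit : u 0 = u₀) :
    ∃ C > (0 : ℝ), ∃ T₀ > (0 : ℝ), ∀ T : ℝ, T₀ ≤ T →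
      (∫ x, w x) ≤ C * T ^ ((N : ℝ) / 2 - σ - p / (p - 1)) :=
  test_function_inequality_global_solution_general hp1 hwC.1 hwI
    { continuousOn := hcont.mono (prod_mono_left Ioi_subset_Ici_self)
      contDiff := hx
      differentiableAt := fun t ht x => (hpde t ht x).differentiableAt
      lap_add_le_deriv := fun t ht x => by rw [(hpde t ht x).deriv, add_assoc] }

end
end
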